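/- Let A be a basic indecomposable artin algebra and Γ a cycle-finite component of the cyclic quiver _cΓ_A. Then there exists a convex idempotent e_Γ of A such that the support algebra supp(Γ) is isomorphic to the algebra e_Γ A e_Γ. -/

import Mathlib

/-!
Common framework: finite length modules over a ring, the radical of the module
category, cycles of indecomposable modules, Auslander-Reiten quivers,
translation quivers notions, and classes of artin algebras.
Right `A`-modules are formalized as left `Aᵐᵒᵖ`-modules.
-/

universe u

/-- A bundled object of `mod R`: a finite length `R`-module. -/
structure ModA (R : Type u) [Ring R] : Type (u + 1) where
  M : Type u
  [acg : AddCommGroup M]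
  [mod : Module R M]
  finLen : IsFiniteLength R M

attribute [instance] ModA.acg ModA.mod

/-- A bundled (not necessarily finite length) `R`-module. -/
structure RawMod (R : Type u) [Ring R] : Type (u + 1) where
  M : Type u
  [acg : AddCommGroup M]
  [mod : Module R M]

attribute [instance] RawMod.acg RawMod.mod

/-- A module is indecomposable iff it is nonzero and its endomorphism ring has no
nontrivial idempotents. -/
def IsIndecMod (R : Type u) [Ring R] (M : Type u) [AddCommGroup M] [Module R M] : Prop :=
  Nontrivial M ∧ ∀ f : Module.End R M, f * f = f → f = 0 ∨ f = 1

namespace ModA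

variable {R : Type u} [Ring R]

/-- Indecomposability of an object of `mod R`. -/
def IsIndec (X : ModA R) : Prop := IsIndecMod R X.M

/-- Isomorphism of objects of `mod R`. -/
def Iso (X Y : ModA R) : Prop := Nonempty (X.M ≃ₗ[R] Y.M)

end ModA

/-- Membership in the radical `rad(X, Y)` of the category `mod R`: a map `f : X → Y`
belongs to the radical iff for every indecomposable `Z` and all `g : Z → X`, `h : Y → Z`
the composite `h ∘ f ∘ g` is not an isomorphism. -/
def InRad {R : Type u} [Ring R] {X Y : ModA R} (f : X.M →ₗ[R] Y.M) : Prop :=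
  ∀ Z : ModA R, Z.IsIndec → ∀ (g : Z.M →ₗ[R] X.M) (h : Y.M →ₗ[R] Z.M),
    ¬Function.Bijective (h.comp (f.comp g))

/-- The powers `rad^n` of the radical of `mod R`. -/
def radPow (R : Type u) [Ring R] : ℕ → ∀ X Y : ModA R, AddSubgroup (X.M →ₗ[R] Y.M)
  | 0, _, _ => ⊤
  | n + 1, X, Y => AddSubgroup.closure
      {f | ∃ (Z : ModA R) (g : X.M →ₗ[R] Z.M) (h : Z.M →ₗ[R] Y.M),
        InRad g ∧ h ∈ radPow R n Z Y ∧ f = h.comp g}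

/-- Membership in the infinite radical `rad^∞ = ⋂ₙ radⁿ` of `mod R`. -/
def InRadInf {R : Type u} [Ring R] {X Y : ModA R} (f : X.M →ₗ[R] Y.M) : Prop :=
  ∀ n : ℕ, f ∈ radPow R n X Y

/-- A cycle in `ind R`: a sequence of nonzero nonisomorphisms
`M₀ → M₁ → ⋯ → M_{r-1} → M_r = M₀` between indecomposable modules. -/
structure ModCycle (R : Type u) [Ring R] : Type (u + 1) where
  len : ℕ
  len_pos : 0 < len
  obj : Fin (len + 1) → ModA R
  obj_indec : ∀ i, (obj i).IsIndec
  closed : obj (Fin.last len) = obj 0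
  hom : ∀ i : Fin len, (obj i.castSucc).M →ₗ[R] (obj i.succ).M
  hom_ne_zero : ∀ i, hom i ≠ 0
  hom_not_iso : ∀ i, ¬Function.Bijective (hom i)

/-- A cycle is finite if none of its homomorphisms lies in the infinite radical. -/
def ModCycle.IsFiniteCycle {R : Type u} [Ring R] (c : ModCycle R) : Prop :=
  ∀ i, ¬InRadInf (c.hom i)

/-- The cycle passes through the module `M`. -/
def ModCycle.Passes {R : Type u} [Ring R] (c : ModCycle R) (M : ModA R) : Prop :=
  ∃ i, (c.obj i).Iso M

/-- A module is cycle-finite if it lies on a cycle and every cycle through it is finite. -/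
def IsCycleFiniteModule {R : Type u} [Ring R] (M : ModA R) : Prop :=
  (∃ c : ModCycle R, c.Passes M) ∧ ∀ c : ModCycle R, c.Passes M → c.IsFiniteCycle

/-- A module is directing if it lies on no cycle. -/
def IsDirectingModule {R : Type u} [Ring R] (M : ModA R) : Prop :=
  ¬∃ c : ModCycle R, c.Passes M

section Irreducible

variable {R : Type u} [Ring R]

/-- `f` is a split monomorphism (a section). -/
def SplitMonoMap {X Y : ModA R} (f : X.M →ₗ[R] Y.M) : Prop :=
  ∃ r : Y.M →ₗ[R] X.M, r.comp f = LinearMap.id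

/-- `f` is a split epimorphism (a retraction). -/
def SplitEpiMap {X Y : ModA R} (f : X.M →ₗ[R] Y.M) : Prop :=
  ∃ s : Y.M →ₗ[R] X.M, f.comp s = LinearMap.id

/-- `f` is an irreducible homomorphism. -/
def IsIrred {X Y : ModA R} (f : X.M →ₗ[R] Y.M) : Prop :=
  ¬SplitMonoMap f ∧ ¬SplitEpiMap f ∧
    ∀ (Z : ModA R) (g : X.M →ₗ[R] Z.M) (h : Z.M →ₗ[R] Y.M), h.comp g = f →
      SplitMonoMap g ∨ SplitEpiMap h

end Irreducible

/-- An almost split (Auslander-Reiten) sequence `0 → l → m → r → 0` in `mod R`. -/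
structure AlmostSplitSeq (R : Type u) [Ring R] : Type (u + 1) where
  l : ModA R
  m : ModA R
  r : ModA R
  f : l.M →ₗ[R] m.M
  g : m.M →ₗ[R] r.M
  inj : Function.Injective f
  surj : Function.Surjective g
  exact : LinearMap.range f = LinearMap.ker g
  not_split : ¬SplitEpiMap g
  l_indec : l.IsIndec
  r_indec : r.IsIndec
  right_almost : ∀ (Z : ModA R) (h : Z.M →ₗ[R] r.M), ¬SplitEpiMap h →
      ∃ h' : Z.M →ₗ[R] m.M, g.comp h' = h
  left_almost : ∀ (Z : ModA R) (h : l.M →ₗ[R] Z.M), ¬SplitMonoMap h →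
      ∃ h' : m.M →ₗ[R] Z.M, h'.comp f = h

/-- `N ≅ τ M` for the Auslander-Reiten translation `τ = DTr`. -/
def IsTauOf {R : Type u} [Ring R] (N M : ModA R) : Prop :=
  ∃ s : AlmostSplitSeq R, s.l.Iso N ∧ s.r.Iso M

/-- The indecomposable objects of `mod R`. -/
def IndecModA (R : Type u) [Ring R] := {X : ModA R // X.IsIndec}

/-- Isomorphism is an equivalence relation on indecomposable modules. -/
def isoSetoid (R : Type u) [Ring R] : Setoid (IndecModA R) where
  r X Y := X.1.Iso Y.1
  iseqv :=
    { refl := fun X => ⟨LinearEquiv.refl R X.1.M⟩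
      symm := fun h => h.elim fun e => ⟨e.symm⟩
      trans := fun h h' => h.elim fun e => h'.elim fun e' => ⟨e.trans e'⟩ }

/-- The vertices of the Auslander-Reiten quiver `Γ_R`: isomorphism classes of
indecomposable modules in `mod R`. -/
def ARVertex (R : Type u) [Ring R] := Quotient (isoSetoid R)

/-- The vertex of `Γ_R` given by an indecomposable module. -/
def ARVertex.mk {R : Type u} [Ring R] (X : IndecModA R) : ARVertex R :=
  Quotient.mk (isoSetoid R) X

section ARQuiver

variable {R : Type u} [Ring R]

/-- The arrows of the Auslander-Reiten quiver: `x → y` iff there is an irreducible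
homomorphism between representatives. -/
def ARArrow (x y : ARVertex R) : Prop :=
  ∃ (X Y : IndecModA R) (f : X.1.M →ₗ[R] Y.1.M),
    IsIrred f ∧ ARVertex.mk X = x ∧ ARVertex.mk Y = y

/-- `TauRel x y` iff `x = τ y` in the Auslander-Reiten quiver. -/
def TauRel (x y : ARVertex R) : Prop :=
  ∃ X Y : IndecModA R, ARVertex.mk X = x ∧ ARVertex.mk Y = y ∧ IsTauOf X.1 Y.1

/-- A vertex given by an (indecomposable) projective module. -/
def IsProjVertex (x : ARVertex R) : Prop :=
  ∃ X : IndecModA R, ARVertex.mk X = x ∧ Module.Projective R X.1.M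

/-- A vertex given by an (indecomposable) injective module. -/
def IsInjVertex (x : ARVertex R) : Prop :=
  ∃ X : IndecModA R, ARVertex.mk X = x ∧ Module.Injective R X.1.M

/-- The vertex lies on an oriented cycle of `Γ_R`. -/
def OnARCycle (x : ARVertex R) : Prop := Relation.TransGen ARArrow x x

/-- An edge (arrow in either direction) of the underlying graph of `Γ_R`. -/
def ARStep (x y : ARVertex R) : Prop := ARArrow x y ∨ ARArrow y x

/-- `D` is a connected component of the full subquiver of `Γ_R` on the vertex set `S`. -/
def IsComponentOf (S D : Set (ARVertex R)) : Prop :=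
  D ⊆ S ∧ D.Nonempty ∧
    (∀ x ∈ D, ∀ y ∈ S, ARStep x y → y ∈ D) ∧
    ∀ x ∈ D, ∀ y ∈ D, Relation.ReflTransGen (fun a b => a ∈ S ∧ b ∈ S ∧ ARStep a b) x y

/-- `C` is a connected component of `Γ_R`. -/
def IsARComponent (C : Set (ARVertex R)) : Prop := IsComponentOf Set.univ C

/-- The vertex lies on an oriented cycle all of whose vertices belong to `S`. -/
def OnCycleIn (S : Set (ARVertex R)) (x : ARVertex R) : Prop :=
  Relation.TransGen (fun a b => a ∈ S ∧ b ∈ S ∧ ARArrow a b) x x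

/-- `Γ` is a connected component of the cyclic quiver `_cΓ_R` (a cyclic component). -/
def IsCyclicComponent (Γ : Set (ARVertex R)) : Prop :=
  IsComponentOf {x | OnARCycle x} Γ

/-- A vertex represented by a cycle-finite module. -/
def IsCycleFiniteVertex (x : ARVertex R) : Prop :=
  ∃ X : IndecModA R, ARVertex.mk X = x ∧ IsCycleFiniteModule X.1

/-- A vertex represented by a directing module. -/
def IsDirectingVertex (x : ARVertex R) : Prop :=
  ∃ X : IndecModA R, ARVertex.mk X = x ∧ IsDirectingModule X.1

/-- A cycle-finite cyclic component: a cyclic component containing a cycle-finite module. -/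
def IsCycleFiniteCyclicComponent (Γ : Set (ARVertex R)) : Prop :=
  IsCyclicComponent Γ ∧ ∃ x ∈ Γ, IsCycleFiniteVertex x

/-- A full translation subquiver is cyclic if each of its vertices lies on an oriented
cycle inside it. -/
def IsCyclicSub (S : Set (ARVertex R)) : Prop := ∀ x ∈ S, OnCycleIn S x

/-- A full translation subquiver is coherent: every projective vertex is the start of an
infinite sectional path inside it, and every injective vertex is the end of an infinite
sectional path inside it. -/
def IsCoherentSub (S : Set (ARVertex R)) : Prop :=
  (∀ x ∈ S, IsProjVertex x → ∃ c : ℕ → ARVertex R, c 0 = x ∧ (∀ n, c n ∈ S) ∧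
      (∀ n, ARArrow (c n) (c (n + 1))) ∧ ∀ n, ¬TauRel (c n) (c (n + 2))) ∧
  (∀ x ∈ S, IsInjVertex x → ∃ c : ℕ → ARVertex R, c 0 = x ∧ (∀ n, c n ∈ S) ∧
      (∀ n, ARArrow (c (n + 1)) (c n)) ∧ ∀ n, ¬TauRel (c (n + 2)) (c n))

/-- `S` is a convex subquiver of (the full subquiver on) `C`: every path in `C` with
source and target in `S` has all its vertices in `S`. -/
def ConvexIn (C S : Set (ARVertex R)) : Prop :=
  ∀ (n : ℕ) (c : ℕ → ARVertex R), (∀ k ≤ n, c k ∈ C) →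
    (∀ k < n, ARArrow (c k) (c (k + 1))) → c 0 ∈ S → c n ∈ S → ∀ k ≤ n, c k ∈ S

/-- `S` is the core of the almost acyclic component `C`: the finite convex subquiver of
`C` containing all vertices lying on oriented cycles in `C`. -/
def IsCoreOf (C S : Set (ARVertex R)) : Prop :=
  S ⊆ C ∧ S.Finite ∧ ConvexIn C S ∧ ∀ x ∈ C, OnCycleIn C x → x ∈ S

/-- A component is almost acyclic if all but finitely many of its vertices do not lie on
oriented cycles. -/
def IsAlmostAcyclicComp (C : Set (ARVertex R)) : Prop := {x ∈ C | OnCycleIn C x}.Finite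

/-- A component is almost cyclic if its cyclic part is cofinite. -/
def IsAlmostCyclicComp (C : Set (ARVertex R)) : Prop := {x ∈ C | ¬OnCycleIn C x}.Finite

/-- Two vertices lie in the same `τ`-orbit. -/
def TauConn (x y : ARVertex R) : Prop :=
  Relation.ReflTransGen (fun a b => TauRel a b ∨ TauRel b a) x y

/-- The left stable part of `C`: remove the `τ`-orbits of projective vertices. -/
def leftStable (C : Set (ARVertex R)) : Set (ARVertex R) :=
  {x | x ∈ C ∧ ¬∃ y, TauConn x y ∧ IsProjVertex y}

/-- The right stable part of `C`: remove the `τ`-orbits of injective vertices. -/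
def rightStable (C : Set (ARVertex R)) : Set (ARVertex R) :=
  {x | x ∈ C ∧ ¬∃ y, TauConn x y ∧ IsInjVertex y}

/-- The stable part of `C`. -/
def stablePart (C : Set (ARVertex R)) : Set (ARVertex R) := leftStable C ∩ rightStable C

end ARQuiver

/-- The arrows of the translation quiver `ℤA∞/(τ^r)`, with vertices indexed by the
`τ`-orbit coordinate in `ZMod r` and the quasi-length (minus one) in `ℕ`. -/
def TubeArrow {r : ℕ} : ZMod r × ℕ → ZMod r × ℕ → Prop := fun u v =>
  (v.1 = u.1 ∧ v.2 = u.2 + 1) ∨ (v.1 = u.1 + 1 ∧ u.2 = v.2 + 1)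

section Tube

variable {R : Type u} [Ring R]

/-- `T` is a stable tube of rank `r`, parametrized by `φ : ℤA∞/(τ^r) → Γ_R`. -/
def IsStableTubeVia (T : Set (ARVertex R)) (r : ℕ) (φ : ZMod r × ℕ → ARVertex R) : Prop :=
  0 < r ∧ Function.Injective φ ∧ Set.range φ = T ∧
    (∀ u v, TubeArrow u v → ARArrow (φ u) (φ v)) ∧
    (∀ u v, ARArrow (φ u) (φ v) → TubeArrow u v) ∧
    ∀ (i : ZMod r) (n : ℕ), TauRel (φ (i - 1, n)) (φ (i, n))

/-- `T` is a stable tube. -/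
def IsStableTube (T : Set (ARVertex R)) : Prop := ∃ r φ, IsStableTubeVia T r φ

end Tube

section Separating

variable {R : Type u} [Ring R]

/-- A family of vertices is generalized standard if `rad^∞` vanishes between its modules. -/
def GeneralizedStandardSet (U : Set (ARVertex R)) : Prop :=
  ∀ X Y : IndecModA R, ARVertex.mk X ∈ U → ARVertex.mk Y ∈ U →
    ∀ f : X.1.M →ₗ[R] Y.1.M, InRadInf f → f = 0

/-- `S` is (isomorphic to) a composition factor (a subquotient) of `M`. -/
def IsCompFactorMod (R : Type u) [Ring R] (S : Type u) [AddCommGroup S] [Module R S]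
    (M : Type u) [AddCommGroup M] [Module R M] : Prop :=
  ∃ N' N : Submodule R M, N' ≤ N ∧
    Nonempty ((↥N ⧸ N'.comap N.subtype) ≃ₗ[R] S)

/-- A family of vertices is sincere if every simple module is a composition factor of one
of its modules. -/
def SincereSet (U : Set (ARVertex R)) : Prop :=
  ∀ (S : Type u) [AddCommGroup S] [Module R S], IsSimpleModule R S →
    ∃ x ∈ U, ∃ X : IndecModA R, ARVertex.mk X = x ∧ IsCompFactorMod R S X.1.M

/-- All homomorphisms from modules with vertex in `U` to modules with vertex in `V` vanish. -/
def HomVanish (U V : Set (ARVertex R)) : Prop :=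
  ∀ X Y : IndecModA R, ARVertex.mk X ∈ U → ARVertex.mk Y ∈ V →
    ∀ f : X.1.M →ₗ[R] Y.1.M, f = 0

/-- Every homomorphism from a module in `U` to a module in `V` factors through the
additive closure of the modules in `W`. -/
def FactorsThrough (U W V : Set (ARVertex R)) : Prop :=
  ∀ X Y : IndecModA R, ARVertex.mk X ∈ U → ARVertex.mk Y ∈ V →
    ∀ f : X.1.M →ₗ[R] Y.1.M, ∃ (k : ℕ) (Z : Fin k → IndecModA R)
      (g : ∀ i, X.1.M →ₗ[R] (Z i).1.M) (h : ∀ i, (Z i).1.M →ₗ[R] Y.1.M),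
      (∀ i, ARVertex.mk (Z i) ∈ W) ∧ f = ∑ i, (h i).comp (g i)

/-- `cs` is a separating family of components of `Γ_R`. -/
def IsSeparatingFamily (cs : Set (Set (ARVertex R))) : Prop :=
  ∃ ps qs : Set (Set (ARVertex R)),
    (∀ C ∈ ps, IsARComponent C) ∧ (∀ C ∈ cs, IsARComponent C) ∧ (∀ C ∈ qs, IsARComponent C) ∧
    (∀ C, IsARComponent C → C ∈ ps ∨ C ∈ cs ∨ C ∈ qs) ∧
    (∀ C ∈ ps, C ∉ cs ∧ C ∉ qs) ∧ (∀ C ∈ cs, C ∉ qs) ∧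
    SincereSet (⋃₀ cs) ∧ GeneralizedStandardSet (⋃₀ cs) ∧
    HomVanish (⋃₀ qs) (⋃₀ ps) ∧ HomVanish (⋃₀ qs) (⋃₀ cs) ∧ HomVanish (⋃₀ cs) (⋃₀ ps) ∧
    FactorsThrough (⋃₀ ps) (⋃₀ cs) (⋃₀ qs)

end Separating

/-! ### Classes of algebras via their Auslander-Reiten quivers.
For a ring `B`, the category `mod B` of finitely generated right `B`-modules is
realized as the category of finite length left `Bᵐᵒᵖ`-modules. -/

/-- An algebra is of finite representation type if it has only finitely many isomorphism
classes of indecomposable finitely generated (right) modules. -/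
def IsFiniteRepTypeAlg (B : Type u) [Ring B] : Prop :=
  (Set.univ : Set (ARVertex Bᵐᵒᵖ)).Finite

/-- An algebra is cycle-finite if all cycles in `ind B` are finite. -/
def IsCycleFiniteAlg (B : Type u) [Ring B] : Prop :=
  ∀ c : ModCycle Bᵐᵒᵖ, c.IsFiniteCycle

/-- A generalized multicoil algebra: an algebra whose Auslander-Reiten quiver admits a
separating family of almost cyclic coherent components. -/
def IsGeneralizedMulticoilAlgebra (B : Type u) [Ring B] : Prop :=
  ∃ cs : Set (Set (ARVertex Bᵐᵒᵖ)),
    (∀ C ∈ cs, IsARComponent C ∧ IsAlmostCyclicComp C ∧ IsCoherentSub C) ∧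
    IsSeparatingFamily cs

/-- A generalized double tilted algebra: an algebra whose Auslander-Reiten quiver admits
a separating almost acyclic component (a connecting component). -/
def IsGeneralizedDoubleTiltedAlgebra (B : Type u) [Ring B] : Prop :=
  ∃ C : Set (ARVertex Bᵐᵒᵖ),
    IsARComponent C ∧ IsAlmostAcyclicComp C ∧ IsSeparatingFamily {C}

/-- A concealed canonical algebra: an algebra whose Auslander-Reiten quiver admits a
separating family of stable tubes. -/
def IsConcealedCanonicalAlgebra (B : Type u) [Ring B] : Prop :=
  ∃ ts : Set (Set (ARVertex Bᵐᵒᵖ)), (∀ T ∈ ts, IsStableTube T) ∧ IsSeparatingFamily ts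

/-- A generic module: an indecomposable module of infinite length with finite endolength. -/
def IsGenericModule (R : Type u) [Ring R] (N : RawMod R) : Prop :=
  IsIndecMod R N.M ∧ ¬IsFiniteLength R N.M ∧ IsFiniteLength (Module.End R N.M) N.M

/-- The endolength of a module: its length over its endomorphism ring. -/
noncomputable def endolength (R : Type u) [Ring R] (N : RawMod R) : WithBot ℕ∞ :=
  Order.krullDim (Submodule (Module.End R N.M) N.M)

/-- Generic tameness in the sense of Crawley-Boevey: for each `d` there are only finitely
many isomorphism classes of generic (right) modules of endolength `d`. -/
def IsGenericallyTameAlg (B : Type u) [Ring B] : Prop :=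
  ∀ d : ℕ, ∃ (k : ℕ) (T : Fin k → RawMod Bᵐᵒᵖ),
    ∀ N : RawMod Bᵐᵒᵖ, IsGenericModule Bᵐᵒᵖ N → endolength Bᵐᵒᵖ N = (d : ℕ∞) →
      ∃ i, Nonempty (N.M ≃ₗ[Bᵐᵒᵖ] (T i).M)

/-- A tame generalized multicoil algebra. -/
def IsTameGeneralizedMulticoilAlgebra (B : Type u) [Ring B] : Prop :=
  IsGeneralizedMulticoilAlgebra B ∧ IsGenericallyTameAlg B

/-- A tame generalized double tilted algebra. -/
def IsTameGeneralizedDoubleTiltedAlgebra (B : Type u) [Ring B] : Prop :=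
  IsGeneralizedDoubleTiltedAlgebra B ∧ IsGenericallyTameAlg B

/-! ### The quiver of an algebra, convex idempotents, basic and connected algebras -/

section AlgebraSide

variable (A : Type u) [Ring A]

/-- The Jacobson radical of `A` (as a left ideal; it is in fact two-sided). -/
def jacobsonRad : Ideal A := (⊥ : Ideal A).jacobson

/-- The square of the Jacobson radical of `A`. -/
def jacobsonRadSq : Ideal A :=
  Ideal.span {x | ∃ a ∈ jacobsonRad A, ∃ b ∈ jacobsonRad A, x = a * b}

/-- A primitive idempotent of `A`. -/
def IsPrimitiveIdempotent (e : A) : Prop :=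
  IsIdempotentElem e ∧ e ≠ 0 ∧
    ∀ f g : A, IsIdempotentElem f → IsIdempotentElem g → f * g = 0 → g * f = 0 →
      e = f + g → f = 0 ∨ g = 0

/-- A complete family of pairwise orthogonal primitive idempotents of `A`; its indices
are the vertices of the quiver `Q_A` of `A`. -/
structure CompleteIdemFamily (A : Type u) [Ring A] where
  n : ℕ
  e : Fin n → A
  prim : ∀ i, IsPrimitiveIdempotent A (e i)
  orth : ∀ i j, i ≠ j → e i * e j = 0
  total : ∑ i, e i = 1

/-- There is an arrow `i → j` in the quiver `Q_A` iff `e_i (rad A) e_j ⊄ (rad A)²`. -/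
def QAarrow (E : CompleteIdemFamily A) (i j : Fin E.n) : Prop :=
  ∃ y ∈ jacobsonRad A, E.e i * y * E.e j ∉ jacobsonRadSq A

/-- A set of vertices of `Q_A` is convex if every path of `Q_A` with source and target in
it has all its vertices in it. -/
def ConvexVertexSet (E : CompleteIdemFamily A) (S : Set (Fin E.n)) : Prop :=
  ∀ (n : ℕ) (c : ℕ → Fin E.n), (∀ k < n, QAarrow A E (c k) (c (k + 1))) →
    c 0 ∈ S → c n ∈ S → ∀ k ≤ n, c k ∈ S

/-- A convex idempotent of `A`: a sum of pairwise orthogonal primitive idempotents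
corresponding to the vertices of a convex subquiver of `Q_A`. -/
def IsConvexIdempotent (e : A) : Prop :=
  ∃ (E : CompleteIdemFamily A) (S : Finset (Fin E.n)),
    ConvexVertexSet A E ↑S ∧ e = ∑ i ∈ S, E.e i

/-- The corner `eAe` of `A` at an idempotent `e`, as a nonunital subring (it is a unital
ring with unit `e`). -/
def cornerRing (e : A) : NonUnitalSubring A where
  carrier := {x | e * x = x ∧ x * e = x}
  zero_mem' := by simp
  add_mem' := by
    rintro a b ⟨ha1, ha2⟩ ⟨hb1, hb2⟩
    constructor
    · rw [mul_add, ha1, hb1]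
    · rw [add_mul, ha2, hb2]
  neg_mem' := by
    rintro a ⟨ha1, ha2⟩
    constructor
    · rw [mul_neg, ha1]
    · rw [neg_mul, ha2]
  mul_mem' := by
    rintro a b ⟨ha1, ha2⟩ ⟨hb1, hb2⟩
    constructor
    · rw [← mul_assoc, ha1]
    · rw [mul_assoc, hb2]

/-- An (indecomposable =) connected algebra: no nontrivial central idempotents. -/
def IsConnectedAlgebra : Prop :=
  Nontrivial A ∧ ∀ e : A, IsIdempotentElem e → e ∈ Set.center A → e = 0 ∨ e = 1

/-- A basic algebra: distinct orthogonal primitive idempotents have nonisomorphic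
associated indecomposable projective right modules. -/
def IsBasicAlgebra : Prop :=
  ¬∃ e f : A, IsPrimitiveIdempotent A e ∧ IsPrimitiveIdempotent A f ∧
    e * f = 0 ∧ f * e = 0 ∧
    Nonempty ((Submodule.span Aᵐᵒᵖ {e} : Submodule Aᵐᵒᵖ A) ≃ₗ[Aᵐᵒᵖ]
      (Submodule.span Aᵐᵒᵖ {f} : Submodule Aᵐᵒᵖ A))

end AlgebraSide

/-! ### Support algebras and faithful algebras of families of vertices -/

section Support

variable (A : Type u) [Ring A]

/-- The radical of a module: the intersection of its maximal submodules. -/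
def modRadical (R : Type u) [Ring R] (M : Type u) [AddCommGroup M] [Module R M] :
    Submodule R M :=
  sInf {N | IsCoatom N}

/-- The intersection `ann_A(Γ)` of the annihilators of all right `A`-modules whose
vertices belong to `Γ`, as a two-sided ideal of `A`. -/
def annTwoSidedIdeal (Γ : Set (ARVertex Aᵐᵒᵖ)) : TwoSidedIdeal A :=
  TwoSidedIdeal.mk'
    {a | ∀ x ∈ Γ, ∀ X : IndecModA Aᵐᵒᵖ, ARVertex.mk X = x →
      ∀ m : X.1.M, MulOpposite.op a • m = 0}
    (by intro x _ X _ m; simp)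
    (by
      intro a b ha hb x hx X hX m
      have : MulOpposite.op (a + b) • m = MulOpposite.op a • m + MulOpposite.op b • m := by
        rw [← add_smul]; rfl
      rw [this, ha x hx X hX m, hb x hx X hX m, add_zero])
    (by
      intro a ha x hx X hX m
      have : MulOpposite.op (-a) • m = -(MulOpposite.op a • m) := by
        rw [← neg_smul]; rfl
      rw [this, ha x hx X hX m, neg_zero])
    (by
      intro a b hb x hx X hX m
      have : MulOpposite.op (a * b) • m = MulOpposite.op b • (MulOpposite.op a • m) := by
        rw [← mul_smul]; rfl
      rw [this, hb x hx X hX _])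
    (by
      intro a b ha x hx X hX m
      have : MulOpposite.op (a * b) • m = MulOpposite.op b • (MulOpposite.op a • m) := by
        rw [← mul_smul]; rfl
      rw [this, ha x hx X hX m, smul_zero])

/-- The faithful algebra `B(Γ) = A / ann_A(Γ)` of a family `Γ` of vertices of `Γ_A`. -/
abbrev faithfulAlg (Γ : Set (ARVertex Aᵐᵒᵖ)) : Type u :=
  (annTwoSidedIdeal A Γ).ringCon.Quotient

/-- The canonical projection `A → B(Γ)`. -/
def faithfulProj (Γ : Set (ARVertex Aᵐᵒᵖ)) : A →+* faithfulAlg A Γ :=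
  RingCon.mk' (annTwoSidedIdeal A Γ).ringCon

/-- The trace ideal `t_A(Γ)`: the two-sided ideal of `A` generated by the images of all
homomorphisms of right `A`-modules from `Q` to `A`. -/
def traceIdeal (Q : Submodule Aᵐᵒᵖ A) : TwoSidedIdeal A :=
  TwoSidedIdeal.span (⋃ f : ↥Q →ₗ[Aᵐᵒᵖ] A, Set.range f)

/-- A decomposition `A = P_Γ ⊕ Q_Γ` of `A` in `mod A` such that the simple summands of
`P_Γ / rad P_Γ` are exactly the simple composition factors of the modules in `Γ`. -/
structure GammaDecomp (A : Type u) [Ring A] (Γ : Set (ARVertex Aᵐᵒᵖ)) where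
  P : Submodule Aᵐᵒᵖ A
  Q : Submodule Aᵐᵒᵖ A
  compl : IsCompl P Q
  top_factors : ∀ (S : Type u) [AddCommGroup S] [Module Aᵐᵒᵖ S], IsSimpleModule Aᵐᵒᵖ S →
    (IsCompFactorMod Aᵐᵒᵖ S (↥P ⧸ modRadical Aᵐᵒᵖ ↥P) ↔
      ∃ x ∈ Γ, ∃ X : IndecModA Aᵐᵒᵖ, ARVertex.mk X = x ∧ IsCompFactorMod Aᵐᵒᵖ S X.1.M)

end Support

/-- Restriction of scalars along a surjective ring homomorphism `π : A → B` identifies a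
vertex `y` of `Γ_B` with a vertex `x` of `Γ_A`: representatives have the same underlying
group, with the `A`-action obtained from the `B`-action through `π`. -/
def VertexRestrictsTo {A B : Type u} [Ring A] [Ring B] (π : A →+* B)
    (y : ARVertex Bᵐᵒᵖ) (x : ARVertex Aᵐᵒᵖ) : Prop :=
  ∃ (N : IndecModA Bᵐᵒᵖ) (X : IndecModA Aᵐᵒᵖ), ARVertex.mk N = y ∧ ARVertex.mk X = x ∧
    ∃ e : X.1.M ≃+ N.1.M, ∀ (a : A) (m : X.1.M),
      e (MulOpposite.op a • m) = MulOpposite.op (π a) • e m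

/-! ### `K`-module structures on Hom-groups, lengths, and Ext -/

section KLength

variable (K B : Type u) [CommRing K] [Ring B] [Algebra K B]
variable (X N : Type u) [AddCommGroup X] [Module B X] [AddCommGroup N] [Module B N]

/-- The action of `K` on `B`-linear maps, through `algebraMap K B`. -/
def homKSMul (k : K) (f : X →ₗ[B] N) : X →ₗ[B] N where
  toFun x := algebraMap K B k • f x
  map_add' x y := by show algebraMap K B k • f (x + y) = _; rw [map_add, smul_add]
  map_smul' b x := by
    simp only [map_smul, RingHom.id_apply, smul_smul]
    rw [Algebra.commutes]

/-- The `K`-module structure on the group of `B`-linear maps. -/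
def homKModule : Module K (X →ₗ[B] N) where
  smul := homKSMul K B X N
  one_smul f := LinearMap.ext fun x => by
    show algebraMap K B 1 • f x = f x
    rw [map_one, one_smul]
  mul_smul k l f := LinearMap.ext fun x => by
    show algebraMap K B (k * l) • f x = algebraMap K B k • algebraMap K B l • f x
    rw [map_mul, mul_smul]
  smul_zero k := LinearMap.ext fun x => by
    show algebraMap K B k • (0 : X →ₗ[B] N) x = 0
    simp
  smul_add k f g := LinearMap.ext fun x => by
    show algebraMap K B k • (f + g) x = algebraMap K B k • f x + algebraMap K B k • g x
    simp [smul_add]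
  add_smul k l f := LinearMap.ext fun x => by
    show algebraMap K B (k + l) • f x = algebraMap K B k • f x + algebraMap K B l • f x
    rw [map_add, add_smul]
  zero_smul f := LinearMap.ext fun x => by
    show algebraMap K B 0 • f x = 0
    rw [map_zero, zero_smul]

/-- The length `|Hom_B(X, N)|` of the group of `B`-linear maps `X → N` as a `K`-module. -/
noncomputable def homKLength : WithBot ℕ∞ :=
  letI : Module K (X →ₗ[B] N) := homKModule K B X N
  Order.krullDim (Submodule K (X →ₗ[B] N))

/-- The canonical surjection from the free module on (the underlying set of) `X` to `X`. -/
noncomputable def freeCover : (X →₀ B) →ₗ[B] X :=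
  Finsupp.linearCombination B id

/-- The length `|Ext¹_B(X, N)|` of `Ext¹` as a `K`-module, computed as the cokernel of
`Hom_B(F, N) → Hom_B(Ω X, N)` for the canonical free cover `F → X` with kernel `Ω X`. -/
noncomputable def ext1KLength : WithBot ℕ∞ :=
  letI : Module K (↥(LinearMap.ker (freeCover B X)) →ₗ[B] N) :=
    homKModule K B (↥(LinearMap.ker (freeCover B X))) N
  let D : Submodule K (↥(LinearMap.ker (freeCover B X)) →ₗ[B] N) :=
    { carrier := {f | ∃ g : (X →₀ B) →ₗ[B] N,
        f = g.comp (LinearMap.ker (freeCover B X)).subtype}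
      add_mem' := by
        rintro f₁ f₂ ⟨g₁, rfl⟩ ⟨g₂, rfl⟩
        exact ⟨g₁ + g₂, rfl⟩
      zero_mem' := ⟨0, rfl⟩
      smul_mem' := by
        rintro k f ⟨g, rfl⟩
        exact ⟨homKSMul K B _ N k g, rfl⟩ }
  Order.krullDim (Submodule K ((↥(LinearMap.ker (freeCover B X)) →ₗ[B] N) ⧸ D))

end KLength

/-- Vanishing of `Ext¹_B(X, N)`: every short exact sequence `0 → N → E → X → 0` splits. -/
def Ext1IsZero (B : Type u) [Ring B] (X : Type u) [AddCommGroup X] [Module B X]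
    (N : Type u) [AddCommGroup N] [Module B N] : Prop :=
  ∀ (E : Type u) [AddCommGroup E] [Module B E], ∀ (f : N →ₗ[B] E) (g : E →ₗ[B] X),
    Function.Injective f → Function.Surjective g → LinearMap.range f = LinearMap.ker g →
    ∃ s : X →ₗ[B] E, g.comp s = LinearMap.id

/-- The syzygy `Ω X`: the kernel of the canonical free cover of `X`. -/
noncomputable def syzygyRaw (B : Type u) [Ring B] (X : RawMod B) : RawMod B :=
  ⟨↥(LinearMap.ker (freeCover B X.M))⟩

/-- Iterated syzygies. -/
noncomputable def syzygyIter (B : Type u) [Ring B] : ℕ → RawMod B → RawMod B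
  | 0, X => X
  | n + 1, X => syzygyRaw B (syzygyIter B n X)

/-- Vanishing of `Ext^r_B(X, N)` for `r ≥ 1`, via `Ext^r(X, N) ≅ Ext¹(Ω^{r-1} X, N)`. -/
noncomputable def ExtIsZero (B : Type u) [Ring B] (X N : RawMod B) (r : ℕ) : Prop :=
  Ext1IsZero B (syzygyIter B (r - 1) X).M N.M

/-- `[X] = [M]` in the Grothendieck group `K₀`: the modules `X` and `M` have the same
composition factors including multiplicities. -/
def SameCompFactors {B : Type u} [Ring B] (X M : ModA B) : Prop :=
  ∃ (n : ℕ) (s : Fin (n + 1) → Submodule B X.M) (t : Fin (n + 1) → Submodule B M.M)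
    (σ : Equiv.Perm (Fin n)),
    s 0 = ⊥ ∧ s (Fin.last n) = ⊤ ∧ t 0 = ⊥ ∧ t (Fin.last n) = ⊤ ∧
    (∀ i : Fin n, s i.castSucc ≤ s i.succ) ∧ (∀ i : Fin n, t i.castSucc ≤ t i.succ) ∧
    ∀ i : Fin n,
      IsSimpleModule B (↥(s i.succ) ⧸ (s i.castSucc).comap (s i.succ).subtype) ∧
      Nonempty ((↥(s i.succ) ⧸ (s i.castSucc).comap (s i.succ).subtype) ≃ₗ[B]
        (↥(t (σ i).succ) ⧸ (t (σ i).castSucc).comap (t (σ i).succ).subtype))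

/-- A torsion class in `mod B`: a class of modules closed under factor modules and
extensions. -/
def IsTorsionClass (B : Type u) [Ring B] (T : Set (ModA B)) : Prop :=
  (∀ M ∈ T, ∀ (N : ModA B) (g : M.M →ₗ[B] N.M), Function.Surjective g → N ∈ T) ∧
  ∀ (X E M : ModA B) (f : X.M →ₗ[B] E.M) (g : E.M →ₗ[B] M.M),
    Function.Injective f → Function.Surjective g → LinearMap.range f = LinearMap.ker g →
    X ∈ T → M ∈ T → E ∈ T

/-- A torsion class is functorially finite iff it is of the form `Fac(M)`. -/
def IsFunctoriallyFinite (B : Type u) [Ring B] (T : Set (ModA B)) : Prop :=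
  ∃ M : ModA B,
    T = {N | ∃ (k : ℕ) (g : (Fin k → M.M) →ₗ[B] N.M), Function.Surjective g}

/-- A module `M` is `τ`-rigid if `Hom(M, τM) = 0`. -/
def IsTauRigid {B : Type u} [Ring B] (M : ModA B) : Prop :=
  ∀ N : ModA B, IsTauOf N M → ∀ f : M.M →ₗ[B] N.M, f = 0

/-- A module `M` is rigid if `Ext¹(M, M) = 0`. -/
def IsRigid {B : Type u} [Ring B] (M : ModA B) : Prop := Ext1IsZero B M.M M.M

/-- `α(M) ≤ 2`: the middle term of any almost split sequence ending at `M` has at most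
two indecomposable direct summands. -/
def AlphaLe2 {B : Type u} [Ring B] (M : ModA B) : Prop :=
  ∀ s : AlmostSplitSeq B, s.r.Iso M →
    ∀ (k : ℕ) (N : Fin k → Submodule B s.m.M),
      (∀ i, IsIndecMod B ↥(N i)) → iSupIndep N → (⨆ i, N i) = ⊤ → k ≤ 2


section ModPart
variable {R : Type u} [Ring R]

instance ModA.instNoeth (X : ModA R) : IsNoetherian R X.M :=
  (isFiniteLength_iff_isNoetherian_isArtinian.1 X.finLen).1

instance ModA.instArt (X : ModA R) : IsArtinian R X.M :=
  (isFiniteLength_iff_isNoetherian_isArtinian.1 X.finLen).2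

/-- Bundle a finite length module. -/
abbrev mkM (M : Type u) [AddCommGroup M] [Module R M] [IsNoetherian R M] [IsArtinian R M] :
    ModA R :=
  ⟨M, isFiniteLength_iff_isNoetherian_isArtinian.2 ⟨inferInstance, inferInstance⟩⟩

/-- An indecomposable direct summand. -/
structure Summand (R : Type u) [Ring R] (Z : Type u) [AddCommGroup Z] [Module R Z] where
  W : ModA R
  i : W.M →ₗ[R] Z
  p : Z →ₗ[R] W.M
  indec : W.IsIndec
  split : ∀ x, p (i x) = x

/-- A decomposition into indecomposables. -/
def HasDecomp (R : Type u) [Ring R] (Z : Type u) [AddCommGroup Z] [Module R Z] : Prop :=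
  ∃ (I : Type) (_ : Fintype I) (D : I → Summand R Z), ∀ x, ∑ l, (D l).i ((D l).p x) = x

theorem hasDecomp_aux : ∀ (n : ℕ∞) (Z : Type u) [AddCommGroup Z] [Module R Z]
    [IsNoetherian R Z] [IsArtinian R Z], Module.length R Z = n → HasDecomp R Z := by
  intro n
  induction n using WellFoundedLT.induction with
  | ind n ih =>
  intro Z _ _ _ _ hZ
  by_cases h0 : Nontrivial Z
  swap
  · have : Subsingleton Z := not_nontrivial_iff_subsingleton.1 h0
    exact ⟨Empty, inferInstance, fun i => i.elim, fun x => Subsingleton.elim _ _⟩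
  by_cases hi : (mkM (R := R) Z).IsIndec
  · refine ⟨Unit, inferInstance, fun _ => ⟨mkM (R := R) Z, LinearMap.id, LinearMap.id, hi,
      fun _ => rfl⟩, ?_⟩
    intro x
    simp
  have : ∃ f : Module.End R Z, f * f = f ∧ f ≠ 0 ∧ f ≠ 1 := by
    by_contra hcon
    apply hi
    refine ⟨h0, fun f hf => ?_⟩
    by_contra h2
    push Not at h2
    exact hcon ⟨f, hf, h2.1, h2.2⟩
  obtain ⟨f, hf, hf0, hf1⟩ := this
  have hff : ∀ x, f (f x) = f x := fun x => LinearMap.congr_fun hf x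
  have h1 : LinearMap.range f ≠ ⊤ := by
    intro h
    apply hf1
    ext x
    obtain ⟨y, rfl⟩ := LinearMap.range_eq_top.1 h x
    simp [hff]
  have h2 : LinearMap.ker f ≠ ⊤ := by
    intro h
    exact hf0 (LinearMap.ker_eq_top.1 h)
  obtain ⟨I, _, D, hs⟩ := ih _ (hZ ▸ Submodule.length_lt h1) (LinearMap.range f) rfl
  obtain ⟨I', _, D', hs'⟩ := ih _ (hZ ▸ Submodule.length_lt h2) (LinearMap.ker f) rfl
  let p : Z →ₗ[R] LinearMap.range f := f.rangeRestrict
  let q : Z →ₗ[R] LinearMap.ker f := LinearMap.codRestrict _ (LinearMap.id - f)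
    (fun x => by simp [hff])
  have hp : ∀ x : LinearMap.range f, p x = x := by
    intro x
    obtain ⟨x, y, rfl⟩ := x
    ext
    simp [p, hff]
  have hq : ∀ x : LinearMap.ker f, q x = x := by
    intro x
    ext
    simp [q]
  refine ⟨I ⊕ I', inferInstance, Sum.elim
    (fun l => ⟨(D l).W, (LinearMap.range f).subtype.comp (D l).i, (D l).p.comp p, (D l).indec, ?_⟩)
    (fun l => ⟨(D' l).W, (LinearMap.ker f).subtype.comp (D' l).i, (D' l).p.comp q,
      (D' l).indec, ?_⟩), ?_⟩
  · intro x
    simp only [LinearMap.comp_apply, Submodule.subtype_apply, hp, (D l).split]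
  · intro x
    simp only [LinearMap.comp_apply, Submodule.subtype_apply, hq, (D' l).split]
  · intro x
    have e1 := congrArg Subtype.val (hs (p x))
    have e2 := congrArg Subtype.val (hs' (q x))
    simp only [Submodule.coe_sum] at e1 e2
    rw [Fintype.sum_sum_type]
    refine (congrArg₂ (· + ·) e1 e2).trans ?_
    simp [p, q]

theorem hasDecomp (Z : Type u) [AddCommGroup Z] [Module R Z] [IsNoetherian R Z]
    [IsArtinian R Z] : HasDecomp R Z := hasDecomp_aux _ Z rfl

/-- The Fitting lemma. -/
theorem fitting {X : Type u} [AddCommGroup X] [Module R X] [IsNoetherian R X] [IsArtinian R X]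
    (hX : IsIndecMod R X) (f : Module.End R X)
    (hf : ¬ Function.Bijective f) : ∃ n : ℕ, f ^ n = 0 := by
  obtain ⟨n, hn, hn0⟩ := ((LinearMap.eventually_isCompl_ker_pow_range_pow f).and
    (Filter.eventually_gt_atTop 0)).exists
  let P : Module.End R X := Submodule.projection _ _ hn
  have hid : P * P = P := Submodule.isIdempotentElem_projection hn
  rcases hX.2 P hid with h | h
  · exfalso
    apply hf
    have hk : LinearMap.ker (f ^ n) = ⊥ := by
      rw [eq_bot_iff]
      intro x hx
      have h1 : P x = x := Submodule.projection_apply_left hn ⟨x, hx⟩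
      rw [h] at h1
      simpa using h1.symm
    have hr : LinearMap.range (f ^ n) = ⊤ := by
      have := hn.sup_eq_top
      rwa [hk, bot_sup_eq] at this
    obtain ⟨m, rfl⟩ : ∃ m, n = m + 1 := ⟨n - 1, by omega⟩
    constructor
    · rw [← LinearMap.ker_eq_bot, eq_bot_iff, ← hk]
      intro x hx
      rw [LinearMap.mem_ker] at hx ⊢
      rw [pow_succ, Module.End.mul_apply, hx, map_zero]
    · intro y
      obtain ⟨x, hx⟩ := LinearMap.range_eq_top.1 hr y
      exact ⟨(f ^ m) x, by rw [← hx, pow_succ', Module.End.mul_apply]⟩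
  · refine ⟨n, ?_⟩
    rw [← LinearMap.ker_eq_top, eq_top_iff]
    intro x _
    have h1 : P x ∈ LinearMap.ker (f ^ n) := Submodule.projection_apply_mem hn x
    rw [h] at h1
    exact h1

theorem splitMono_bij {X Y : ModA R} (hY : Y.IsIndec) [Nontrivial X.M] {f : X.M →ₗ[R] Y.M}
    (h : SplitMonoMap f) : Function.Bijective f := by
  obtain ⟨r, hr⟩ := h
  have hr' : ∀ x, r (f x) = x := fun x => LinearMap.congr_fun hr x
  refine ⟨Function.LeftInverse.injective hr', ?_⟩
  rcases hY.2 (f.comp r) (by ext x; simp [hr']) with h | h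
  · exfalso
    obtain ⟨x, hx⟩ := exists_ne (0 : X.M)
    apply hx
    have := LinearMap.congr_fun h (f x)
    simp only [LinearMap.comp_apply, hr', LinearMap.zero_apply] at this
    rw [← hr' x, this, map_zero]
  · intro y
    exact ⟨r y, LinearMap.congr_fun h y⟩

theorem splitEpi_bij {X Y : ModA R} (hX : X.IsIndec) [Nontrivial Y.M] {f : X.M →ₗ[R] Y.M}
    (h : SplitEpiMap f) : Function.Bijective f := by
  obtain ⟨s, hs⟩ := h
  have hs' : ∀ x, f (s x) = x := fun x => LinearMap.congr_fun hs x
  have h1 : Function.Bijective s := splitMono_bij (X := Y) (Y := X) hX ⟨f, hs⟩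
  refine ⟨?_, fun y => ⟨s y, hs' y⟩⟩
  intro a b hab
  obtain ⟨a, rfl⟩ := h1.2 a
  obtain ⟨b, rfl⟩ := h1.2 b
  rw [hs', hs'] at hab
  rw [hab]

theorem bij_splitMono {X Y : ModA R} {f : X.M →ₗ[R] Y.M} (h : Function.Bijective f) :
    SplitMonoMap f :=
  ⟨(LinearEquiv.ofBijective f h).symm.toLinearMap, by
    ext x; exact (LinearEquiv.ofBijective f h).symm_apply_apply x⟩

theorem bij_splitEpi {X Y : ModA R} {f : X.M →ₗ[R] Y.M} (h : Function.Bijective f) :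
    SplitEpiMap f :=
  ⟨(LinearEquiv.ofBijective f h).symm.toLinearMap, by
    ext x; exact (LinearEquiv.ofBijective f h).apply_symm_apply x⟩

/-- A nonisomorphism between indecomposables is radical. -/
theorem inRad_of_not_bij {X Y : ModA R} (hX : X.IsIndec) (hY : Y.IsIndec) (f : X.M →ₗ[R] Y.M)
    (hf : ¬ Function.Bijective f) : InRad f := by
  intro Z hZ g h hb
  have := hZ.1
  have := hX.1
  obtain ⟨r, hr⟩ := bij_splitMono (X := Z) (Y := Z) hb
  have hg : Function.Bijective g := splitMono_bij (X := Z) hX ⟨(r.comp h).comp f, by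
    rw [← hr]; rfl⟩
  obtain ⟨t, ht⟩ := bij_splitEpi (X := Z) (Y := X) hg
  have : SplitMonoMap f := ⟨(g.comp r).comp h, by
    ext x
    obtain ⟨x, rfl⟩ := hg.2 x
    have := LinearMap.congr_fun hr x
    simp only [LinearMap.comp_apply, LinearMap.id_apply] at this ⊢
    rw [this]⟩
  exact hf (splitMono_bij (X := X) hY this)

theorem InRad.comp_left {X Y Z : ModA R} {f : X.M →ₗ[R] Y.M} (hf : InRad f)
    (g : Y.M →ₗ[R] Z.M) : InRad (X := X) (Y := Z) (g.comp f) := fun W hW a b hb =>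
  hf W hW a (b.comp g) hb

theorem InRad.comp_right {X Y Z : ModA R} {f : Y.M →ₗ[R] Z.M} (hf : InRad f)
    (g : X.M →ₗ[R] Y.M) : InRad (X := X) (Y := Z) (f.comp g) := fun W hW a b hb =>
  hf W hW (g.comp a) b hb

theorem radPow_comp_rad : ∀ (n : ℕ) {X Y Z : ModA R} (g : X.M →ₗ[R] Y.M) (h : Y.M →ₗ[R] Z.M),
    g ∈ radPow R n X Y → InRad h → h.comp g ∈ radPow R (n + 1) X Z := by
  intro n
  induction n with
  | zero =>
    intro X Y Z g h _ hh
    apply AddSubgroup.subset_closure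
    exact ⟨Z, h.comp g, LinearMap.id, hh.comp_right g, by simp [radPow], rfl⟩
  | succ n ih =>
    intro X Y Z g h hg hh
    rw [radPow] at hg
    induction hg using AddSubgroup.closure_induction with
    | mem x hx =>
      obtain ⟨W, a, b, ha, hb, rfl⟩ := hx
      apply AddSubgroup.subset_closure
      exact ⟨W, a, h.comp b, ha, ih b h hb hh, rfl⟩
    | zero => rw [LinearMap.comp_zero]; exact zero_mem _
    | add x y _ _ hx hy => rw [LinearMap.comp_add]; exact add_mem hx hy
    | neg x _ hx => rw [LinearMap.comp_neg]; exact neg_mem hx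

end ModPart


section PathPart
open Relation

theorem rtg_fun {α : Type*} {r : α → α → Prop} {a b : α} (h : ReflTransGen r a b) :
    ∃ (n : ℕ) (c : ℕ → α), c 0 = a ∧ c n = b ∧ ∀ k < n, r (c k) (c (k + 1)) := by
  induction h using ReflTransGen.head_induction_on with
  | refl => exact ⟨0, fun _ => b, rfl, rfl, fun k hk => by omega⟩
  | head hac hcb ih =>
    rename_i a' c'
    obtain ⟨n, c, h0, hn, hs⟩ := ih
    refine ⟨n + 1, fun k => Nat.casesOn k a' c, rfl, hn, ?_⟩
    intro k hk
    cases k with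
    | zero => simpa [h0] using hac
    | succ k => exact hs k (by omega)

theorem fun_rtg {α : Type*} {r : α → α → Prop} {n : ℕ} {c : ℕ → α}
    (hs : ∀ k < n, ReflTransGen r (c k) (c (k + 1))) (i j : ℕ) (hij : i ≤ j) (hj : j ≤ n) :
    ReflTransGen r (c i) (c j) := by
  induction j, hij using Nat.le_induction with
  | base => exact ReflTransGen.refl
  | succ j hij ih => exact (ih (by omega)).trans (hs j (by omega))

variable {R : Type u} [Ring R]

theorem mk_eq_iff {X Y : IndecModA R} : ARVertex.mk X = ARVertex.mk Y ↔ X.1.Iso Y.1 :=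
  ⟨fun h => Quotient.exact h, fun h => Quotient.sound h⟩

/-- Chosen representative. -/
noncomputable def ARVertex.rep (x : ARVertex R) : IndecModA R := Quotient.out x

theorem ARVertex.mk_rep (x : ARVertex R) : ARVertex.mk x.rep = x := Quotient.out_eq x

/-- There is a nonzero nonisomorphism between representatives. -/
def NStep (x y : ARVertex R) : Prop :=
  ∃ (X Y : IndecModA R), ARVertex.mk X = x ∧ ARVertex.mk Y = y ∧
    ∃ f : X.1.M →ₗ[R] Y.1.M, f ≠ 0 ∧ ¬ Function.Bijective f

theorem NStep.transport {X Y : IndecModA R} (h : NStep (ARVertex.mk X) (ARVertex.mk Y)) :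
    ∃ f : X.1.M →ₗ[R] Y.1.M, f ≠ 0 ∧ ¬ Function.Bijective f := by
  obtain ⟨X', Y', hX, hY, f, hf, hb⟩ := h
  obtain ⟨a⟩ := mk_eq_iff.1 hX
  obtain ⟨b⟩ := mk_eq_iff.1 hY
  refine ⟨(b.toLinearMap.comp f).comp a.symm.toLinearMap, ?_, ?_⟩
  · intro h0
    apply hf
    ext x
    have := LinearMap.congr_fun h0 (a x)
    simpa using this
  · intro h0
    apply hb
    have h1 : Function.Bijective (b ∘ (f ∘ a.symm)) := h0
    rwa [b.bijective.of_comp_iff', Function.Bijective.of_comp_iff _ a.symm.bijective] at h1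

theorem nreach {X Y : IndecModA R} (f : X.1.M →ₗ[R] Y.1.M) (hf : f ≠ 0) :
    ReflTransGen NStep (ARVertex.mk X) (ARVertex.mk Y) := by
  by_cases hb : Function.Bijective f
  · rw [mk_eq_iff.2 ⟨LinearEquiv.ofBijective f hb⟩]
  · exact ReflTransGen.single ⟨X, Y, rfl, rfl, f, hf, hb⟩

theorem IsIrred.not_bij {X Y : ModA R} {f : X.M →ₗ[R] Y.M} (h : IsIrred f) :
    ¬ Function.Bijective f := fun hb => h.1 (bij_splitMono hb)

theorem IsIrred.ne_zero {X Y : ModA R} [Nontrivial X.M] [Nontrivial Y.M]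
    {f : X.M →ₗ[R] Y.M} (h : IsIrred f) : f ≠ 0 := by
  rintro rfl
  rcases h.2.2 (mkM PUnit) 0 0 (by simp) with ⟨r, hr⟩ | ⟨r, hr⟩
  · obtain ⟨x, hx⟩ := exists_ne (0 : X.M)
    apply hx
    have := LinearMap.congr_fun hr x
    simpa using this.symm
  · obtain ⟨x, hx⟩ := exists_ne (0 : Y.M)
    apply hx
    have := LinearMap.congr_fun hr x
    simpa using this.symm

theorem ARArrow.nstep {x y : ARVertex R} (h : ARArrow x y) : NStep x y := by
  obtain ⟨X, Y, f, hf, hx, hy⟩ := h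
  have := X.2.1
  have := Y.2.1
  exact ⟨X, Y, hx, hy, f, hf.ne_zero, hf.not_bij⟩

theorem radInf_of_not_path : ∀ (n : ℕ) {X Y : IndecModA R} (f : X.1.M →ₗ[R] Y.1.M),
    ¬ Function.Bijective f → ¬ TransGen ARArrow (ARVertex.mk X) (ARVertex.mk Y) →
    f ∈ radPow R n X.1 Y.1 := by
  intro n
  induction n with
  | zero => intro X Y f _ _; simp [radPow]
  | succ n ih =>
    intro X Y f hb hp
    have hX := X.2.1
    have hY := Y.2.1
    have hirr : ¬ IsIrred f := fun h => hp (TransGen.single ⟨X, Y, f, h, rfl, rfl⟩)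
    have h1 : ¬ SplitMonoMap f := fun h => hb (splitMono_bij Y.2 h)
    have h2 : ¬ SplitEpiMap f := fun h => hb (splitEpi_bij X.2 h)
    unfold IsIrred at hirr
    push Not at hirr
    obtain ⟨Z, g, h, hgh, hg, hh⟩ := hirr h1 h2
    obtain ⟨I, _, D, hD⟩ := hasDecomp (R := R) Z.M
    have hf : f = ∑ l, (h.comp (D l).i).comp ((D l).p.comp g) := by
      ext x
      simp only [LinearMap.sum_apply, LinearMap.comp_apply]
      rw [← map_sum, hD, ← hgh]
      rfl
    rw [hf]
    refine sum_mem fun l _ => ?_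
    have hgb : ¬ Function.Bijective ((D l).p.comp g) := by
      intro hb
      obtain ⟨r, hr⟩ := bij_splitMono (X := X.1) (Y := (D l).W) hb
      exact hg ⟨r.comp (D l).p, hr⟩
    have hhb : ¬ Function.Bijective (h.comp (D l).i) := by
      intro hb
      obtain ⟨r, hr⟩ := bij_splitEpi (X := (D l).W) (Y := Y.1) hb
      exact hh ⟨(D l).i.comp r, hr⟩
    let W : IndecModA R := ⟨(D l).W, (D l).indec⟩
    by_cases hXW : TransGen ARArrow (ARVertex.mk X) (ARVertex.mk W)
    · have hWY : ¬ TransGen ARArrow (ARVertex.mk W) (ARVertex.mk Y) := fun h => hp (hXW.trans h)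
      apply AddSubgroup.subset_closure
      exact ⟨W.1, _, _, inRad_of_not_bij X.2 W.2 _ hgb, ih (X := W) (Y := Y) _ hhb hWY, rfl⟩
    · exact radPow_comp_rad n (X := X.1) (Y := W.1) (Z := Y.1) _ _
        (ih (X := X) (Y := W) _ hgb hXW) (inRad_of_not_bij W.2 Y.2 _ hhb)

theorem cf_cycle {x0 : ARVertex R} (h : IsCycleFiniteVertex x0) (n : ℕ) (c : ℕ → ARVertex R)
    (h0 : c 0 = x0) (hn : c n = x0) (hs : ∀ k < n, NStep (c k) (c (k + 1))) :
    ∀ k < n, TransGen ARArrow (c k) (c (k + 1)) := by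
  obtain ⟨X, hX, _, hfin⟩ := h
  have hs' : ∀ k : Fin n, ∃ f : (c k.castSucc).rep.1.M →ₗ[R] (c k.succ).rep.1.M,
      f ≠ 0 ∧ ¬ Function.Bijective f := by
    intro k
    apply NStep.transport
    rw [ARVertex.mk_rep, ARVertex.mk_rep]
    simpa using hs k k.2
  choose F hF0 hFb using hs'
  intro k hk
  let C : ModCycle R :=
    { len := n
      len_pos := by omega
      obj := fun i => (c i).rep.1
      obj_indec := fun i => (c i).rep.2
      closed := by
        simp only [Fin.val_last, Fin.val_zero]
        rw [hn, h0]
      hom := F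
      hom_ne_zero := hF0
      hom_not_iso := hFb }
  have hp : C.Passes X.1 := by
    refine ⟨(0 : Fin (n + 1)), ?_⟩
    show (c ((0 : Fin (n + 1)) : ℕ)).rep.1.Iso X.1
    apply mk_eq_iff.1
    rw [ARVertex.mk_rep, hX]
    exact h0
  have h1 := hfin C hp (⟨k, hk⟩ : Fin n)
  by_contra hcon
  apply h1
  intro m
  apply radInf_of_not_path m (X := (c k).rep) (Y := (c (k + 1)).rep)
  · exact hFb ⟨k, hk⟩
  · rwa [ARVertex.mk_rep, ARVertex.mk_rep]

theorem cf_path {x0 w : ARVertex R} (h : IsCycleFiniteVertex x0) (h1 : ReflTransGen NStep x0 w)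
    (h2 : ReflTransGen NStep w x0) : ReflTransGen ARArrow x0 w ∧ ReflTransGen ARArrow w x0 := by
  obtain ⟨n, c, c0, cn, hc⟩ := rtg_fun h1
  obtain ⟨m, d, d0, dm, hd⟩ := rtg_fun h2
  let C : ℕ → ARVertex R := fun k => if k ≤ n then c k else d (k - n)
  have hC0 : C 0 = x0 := by simp [C, c0]
  have hCn : C n = w := by simp [C, cn]
  have hge : ∀ k, n ≤ k → C k = d (k - n) := by
    intro k hk
    by_cases hkn : k ≤ n
    · have : k = n := by omega
      subst this
      simp [C, cn, d0]
    · simp [C, hkn]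
  have hCm : C (n + m) = x0 := by rw [hge _ (by omega)]; simpa using dm
  have hs : ∀ k < n + m, NStep (C k) (C (k + 1)) := by
    intro k hk
    by_cases hkn : k < n
    · have e1 : C k = c k := by simp [C, hkn.le]
      have e2 : C (k + 1) = c (k + 1) := by simp [C, Nat.succ_le_of_lt hkn]
      rw [e1, e2]
      exact hc k hkn
    · rw [hge k (by omega), hge (k + 1) (by omega), show k + 1 - n = (k - n) + 1 by omega]
      exact hd _ (by omega)
  have key := fun k hk => (cf_cycle h (n + m) C hC0 hCm hs k hk).to_reflTransGen
  refine ⟨?_, ?_⟩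
  · have := fun_rtg key 0 n (by omega) (by omega)
    rwa [hC0, hCn] at this
  · have := fun_rtg key n (n + m) (by omega) (by omega)
    rwa [hCm, hCn] at this

end PathPart


section TorsionPart
open Relation
variable {R : Type u} [Ring R]

theorem desc {E N F : Type u} [AddCommGroup E] [Module R E] [AddCommGroup N] [Module R N]
    [AddCommGroup F] [Module R F] (p : E →ₗ[R] N) (hp : Function.Surjective p)
    (f : E →ₗ[R] F) (h : ∀ x, p x = 0 → f x = 0) : ∃ f' : N →ₗ[R] F, ∀ x, f' (p x) = f x := by
  refine ⟨((LinearMap.ker p).liftQ f (fun x hx => h x hx)).comp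
    (p.quotKerEquivOfSurjective hp).symm.toLinearMap, fun x => ?_⟩
  have : (p.quotKerEquivOfSurjective hp).symm (p x) = (LinearMap.ker p).mkQ x := by
    rw [LinearEquiv.symm_apply_eq]
    rfl
  exact congrArg ((LinearMap.ker p).liftQ f (fun x hx => h x hx)) this

theorem codesc {E N F : Type u} [AddCommGroup E] [Module R E] [AddCommGroup N] [Module R N]
    [AddCommGroup F] [Module R F] (i : N →ₗ[R] E) (hi : Function.Injective i)
    (f : F →ₗ[R] E) (h : ∀ x, ∃ n, i n = f x) : ∃ f' : F →ₗ[R] N, ∀ x, i (f' x) = f x := by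
  refine ⟨(LinearEquiv.ofInjective i hi).symm.toLinearMap.comp
    (f.codRestrict (LinearMap.range i) h), fun x => ?_⟩
  have := (LinearEquiv.ofInjective i hi).apply_symm_apply
    (f.codRestrict (LinearMap.range i) h x)
  exact congrArg Subtype.val this

variable (S : ModA R → Prop)

/-- Torsion free. -/
def TF (N : Type u) [AddCommGroup N] [Module R N] : Prop :=
  ∀ X : ModA R, S X → ∀ (f : X.M →ₗ[R] N) (x : X.M), f x = 0

/-- Torsion. -/
def TT (M : Type u) [AddCommGroup M] [Module R M] : Prop :=
  ∀ (N : Type u) [AddCommGroup N] [Module R N], TF S N → ∀ (f : M →ₗ[R] N) (x : M), f x = 0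

/-- Relative projectivity. -/
def ExtProj (N : Type u) [AddCommGroup N] [Module R N] : Prop :=
  ∀ (E : Type u) [AddCommGroup E] [Module R E] [IsNoetherian R E] [IsArtinian R E]
    (K : Type u) [AddCommGroup K] [Module R K] (k : K →ₗ[R] E) (p : E →ₗ[R] N),
    Function.Surjective p → (∀ e, p e = 0 ↔ ∃ a, k a = e) → TT S K →
    ∃ s : N →ₗ[R] E, ∀ n, p (s n) = n

/-- Relative injectivity. -/
def InjF (M : Type u) [AddCommGroup M] [Module R M] : Prop :=
  ∀ (E : Type u) [AddCommGroup E] [Module R E] [IsNoetherian R E] [IsArtinian R E]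
    (Q : Type u) [AddCommGroup Q] [Module R Q] (i : M →ₗ[R] E) (c : E →ₗ[R] Q),
    Function.Injective i → (∀ e, c e = 0 ↔ ∃ a, i a = e) → TF S Q →
    ∃ r : E →ₗ[R] M, ∀ m, r (i m) = m

variable {S}

theorem TT.of_mem {X : ModA R} (h : S X) : TT S X.M := fun _ _ _ hN f x => hN X h f x

theorem TT.ext {E N K : Type u} [AddCommGroup E] [Module R E] [AddCommGroup N] [Module R N]
    [AddCommGroup K] [Module R K] (k : K →ₗ[R] E) (p : E →ₗ[R] N)
    (hp : Function.Surjective p) (hk : ∀ e, p e = 0 ↔ ∃ a, k a = e)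
    (hK : TT S K) (hN : TT S N) : TT S E := by
  intro F _ _ hF f x
  obtain ⟨f', hf'⟩ := desc p hp f (fun x hx => by
    obtain ⟨a, rfl⟩ := (hk x).1 hx
    exact hK F hF (f.comp k) a)
  rw [← hf', hN F hF f']

theorem TF.ext {E Q M : Type u} [AddCommGroup E] [Module R E] [AddCommGroup Q] [Module R Q]
    [AddCommGroup M] [Module R M] (i : M →ₗ[R] E) (c : E →ₗ[R] Q)
    (hi : Function.Injective i) (hc : ∀ e, c e = 0 ↔ ∃ a, i a = e)
    (hQ : TF S Q) (hM : TF S M) : TF S E := by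
  intro X hX f x
  obtain ⟨f', hf'⟩ := codesc i hi f (fun x => (hc _).1 (hQ X hX (c.comp f) x))
  rw [← hf', hM X hX f', map_zero]

/-- Closure of the class under nonzero maps. -/
def SClosed (S : ModA R → Prop) : Prop :=
  ∀ X Y : ModA R, S X → Y.IsIndec → ∀ f : X.M →ₗ[R] Y.M, f ≠ 0 → S Y

theorem TF.of_not_mem (hS : SClosed S) {Y : ModA R} (hY : Y.IsIndec) (h : ¬ S Y) :
    TF S Y.M := by
  intro X hX f x
  by_contra hx
  exact h (hS X Y hX hY f (fun h => hx (by rw [h]; rfl)))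

open Classical in
theorem TF.extProj (hS : SClosed S) {N : Type u} [AddCommGroup N] [Module R N] (hN : TF S N) :
    ExtProj S N := by
  intro E _ _ _ _ K _ _ k p hp hk hK
  obtain ⟨I, _, D, hD⟩ := hasDecomp (R := R) E
  let e : E →ₗ[R] E := ∑ l, if S (D l).W then (D l).i.comp (D l).p else 0
  have h1 : ∀ x, p (e x) = 0 := by
    intro x
    simp only [e, LinearMap.sum_apply, map_sum]
    refine Finset.sum_eq_zero fun l _ => ?_
    split_ifs with h
    · exact hN _ h (p.comp (D l).i) ((D l).p x)
    · simp
  have h2 : ∀ x, p x = 0 → e x = x := by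
    intro x hx
    obtain ⟨a, rfl⟩ := (hk x).1 hx
    conv_rhs => rw [← hD (k a)]
    simp only [e, LinearMap.sum_apply]
    refine Finset.sum_congr rfl fun l _ => ?_
    split_ifs with h
    · rfl
    · have : (D l).p (k a) = 0 := hK _ (TF.of_not_mem hS (D l).indec h) ((D l).p.comp k) a
      simp [this]
  obtain ⟨s, hs⟩ := desc p hp (LinearMap.id - e) (fun x hx => by simp [h2 x hx])
  refine ⟨s, fun n => ?_⟩
  obtain ⟨x, rfl⟩ := hp n
  simp [hs, h1]

open Classical in
theorem TT.injF (hS : SClosed S) {M : Type u} [AddCommGroup M] [Module R M] (hM : TT S M) :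
    InjF S M := by
  intro E _ _ _ _ Q _ _ i c hi hc hQ
  obtain ⟨I, _, D, hD⟩ := hasDecomp (R := R) E
  let e : E →ₗ[R] E := ∑ l, if S (D l).W then (D l).i.comp (D l).p else 0
  have h1 : ∀ x, c (e x) = 0 := by
    intro x
    simp only [e, LinearMap.sum_apply, map_sum]
    refine Finset.sum_eq_zero fun l _ => ?_
    split_ifs with h
    · exact hQ _ h (c.comp (D l).i) ((D l).p x)
    · simp
  have h2 : ∀ m, e (i m) = i m := by
    intro a
    conv_rhs => rw [← hD (i a)]
    simp only [e, LinearMap.sum_apply]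
    refine Finset.sum_congr rfl fun l _ => ?_
    split_ifs with h
    · rfl
    · have : (D l).p (i a) = 0 := hM _ (TF.of_not_mem hS (D l).indec h) ((D l).p.comp i) a
      simp [this]
  obtain ⟨r, hr⟩ := codesc i hi e (fun x => (hc _).1 (h1 x))
  exact ⟨r, fun m => hi (by rw [hr, h2])⟩

theorem ExtProj.lift {N E W K : Type u} [AddCommGroup N] [Module R N] [AddCommGroup E]
    [Module R E] [AddCommGroup W] [Module R W] [AddCommGroup K] [Module R K]
    [IsNoetherian R N] [IsArtinian R N] [IsNoetherian R E] [IsArtinian R E]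
    (hN : ExtProj S N) (k : K →ₗ[R] E) (p : E →ₗ[R] W) (hp : Function.Surjective p)
    (hk : ∀ e, p e = 0 ↔ ∃ a, k a = e) (hK : TT S K) (q : N →ₗ[R] W) :
    ∃ q' : N →ₗ[R] E, ∀ n, p (q' n) = q n := by
  let d : E × N →ₗ[R] W := p.comp (LinearMap.fst R E N) - q.comp (LinearMap.snd R E N)
  let π : LinearMap.ker d →ₗ[R] N := (LinearMap.snd R E N).comp (LinearMap.ker d).subtype
  let k' : K →ₗ[R] LinearMap.ker d := LinearMap.codRestrict _ ((LinearMap.inl R E N).comp k)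
    (fun a => by
      have := (hk (k a)).2 ⟨a, rfl⟩
      simp [d, this])
  obtain ⟨s, hs⟩ := hN (LinearMap.ker d) K k' π
    (by
      intro n
      obtain ⟨e, he⟩ := hp (q n)
      exact ⟨⟨(e, n), by simp [d, he]⟩, rfl⟩)
    (by
      rintro ⟨⟨e, n⟩, h⟩
      constructor
      · intro hn
        have hn : n = 0 := hn
        subst hn
        have h : p e = 0 := by simpa [d] using h
        obtain ⟨a, rfl⟩ := (hk e).1 h
        exact ⟨a, rfl⟩
      · rintro ⟨a, ha⟩
        rw [← ha]
        rfl) hK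
  refine ⟨(LinearMap.fst R E N).comp ((LinearMap.ker d).subtype.comp s), fun n => ?_⟩
  have h1 : d (s n).1 = 0 := (s n).2
  have h2 : (s n).1.2 = n := hs n
  have h3 : p (s n).1.1 - q (s n).1.2 = 0 := h1
  rw [h2, sub_eq_zero] at h3
  exact h3

theorem InjF.extend {M E W Q : Type u} [AddCommGroup M] [Module R M] [AddCommGroup E]
    [Module R E] [AddCommGroup W] [Module R W] [AddCommGroup Q] [Module R Q]
    [IsNoetherian R M] [IsArtinian R M] [IsNoetherian R E] [IsArtinian R E]
    (hM : InjF S M) (i : W →ₗ[R] E) (c : E →ₗ[R] Q) (hi : Function.Injective i)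
    (hc : ∀ e, c e = 0 ↔ ∃ a, i a = e) (hQ : TF S Q) (q : W →ₗ[R] M) :
    ∃ q' : E →ₗ[R] M, ∀ n, q' (i n) = q n := by
  let V : Submodule R (M × E) := LinearMap.range (q.prod (-i))
  let j : M →ₗ[R] (M × E) ⧸ V := V.mkQ.comp (LinearMap.inl R M E)
  let j' : E →ₗ[R] (M × E) ⧸ V := V.mkQ.comp (LinearMap.inr R M E)
  have hci : ∀ a, c (i a) = 0 := fun a => (hc _).2 ⟨a, rfl⟩
  let c' : (M × E) ⧸ V →ₗ[R] Q := V.liftQ (c.comp (LinearMap.snd R M E)) (by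
    rintro _ ⟨w, rfl⟩
    simp [hci])
  have hjj : ∀ a, j (q a) = j' (i a) := by
    intro a
    refine (Submodule.Quotient.eq V).2 ⟨a, ?_⟩
    simp
  obtain ⟨r, hr⟩ := hM ((M × E) ⧸ V) Q j c'
    (by
      rw [injective_iff_map_eq_zero]
      intro m hm
      obtain ⟨a, ha⟩ := (Submodule.Quotient.mk_eq_zero V).1 hm
      have h1 : q a = m := congrArg Prod.fst ha
      have h2 : - i a = 0 := congrArg Prod.snd ha
      have h3 : a = 0 := hi (by rw [map_zero]; simpa using h2)
      rw [← h1, h3, map_zero])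
    (by
      intro x
      obtain ⟨⟨m, e⟩, rfl⟩ := V.mkQ_surjective x
      constructor
      · intro h
        have h : c e = 0 := h
        obtain ⟨a, rfl⟩ := (hc e).1 h
        refine ⟨m + q a, ?_⟩
        refine (Submodule.Quotient.eq V).2 ⟨a, ?_⟩
        simp
      · rintro ⟨m', hm'⟩
        rw [← hm']
        show c 0 = 0
        simp) hQ
  refine ⟨r.comp j', fun n => ?_⟩
  rw [LinearMap.comp_apply, ← hjj, hr]

end TorsionPart


section StepPart
open Relation
variable {R : Type u} [Ring R]

theorem IsIrred.inj_or_surj {X Y : ModA R} {f : X.M →ₗ[R] Y.M} (h : IsIrred f) :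
    Function.Injective f ∨ Function.Surjective f := by
  rcases h.2.2 (mkM (LinearMap.range f)) f.rangeRestrict (LinearMap.range f).subtype rfl with
    ⟨r, hr⟩ | ⟨s, hs⟩
  · left
    intro a b hab
    have ha := LinearMap.congr_fun hr a
    have hb := LinearMap.congr_fun hr b
    have hab' : f.rangeRestrict a = f.rangeRestrict b := Subtype.ext hab
    simp only [LinearMap.comp_apply, LinearMap.id_apply] at ha hb
    rw [← ha, ← hb]
    exact congrArg r hab'
  · right
    intro y
    have := LinearMap.congr_fun hs y
    obtain ⟨x, hx⟩ := (s y).2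
    exact ⟨x, hx.trans this⟩

variable {S : ModA R → Prop}

/-- Good objects, epi case. -/
def PiE (S : ModA R → Prop) (z : ModA R) : Prop :=
  ExtProj S z.M ∧ ∃ (Y : ModA R) (φ : Y.M →ₗ[R] z.M), TF S Y.M ∧ Function.Surjective φ

/-- Good objects, mono case. -/
def PiM (S : ModA R → Prop) (y : ModA R) : Prop :=
  InjF S y.M ∧ ∃ (Z : ModA R) (ψ : y.M →ₗ[R] Z.M), TT S Z.M ∧ Function.Injective ψ

theorem PiE.base (hS : SClosed S) {y z : ModA R} [Nontrivial y.M] (f : y.M →ₗ[R] z.M)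
    (hf : IsIrred f) (hfs : Function.Surjective f) (hy : TF S y.M) (hz : S z) : PiE S z := by
  refine ⟨?_, y, f, hy, hfs⟩
  intro E _ _ _ _ K _ _ k p hp hk hK
  obtain ⟨q, hq⟩ := (hy.extProj hS).lift k p hp hk hK f
  rcases hf.2.2 (mkM E) q p (LinearMap.ext hq) with ⟨r, hr⟩ | ⟨s, hs⟩
  · exfalso
    have hE : TT S E := TT.ext k p hp hk hK (TT.of_mem hz)
    obtain ⟨x, hx⟩ := exists_ne (0 : y.M)
    apply hx
    have := LinearMap.congr_fun hr x
    rw [LinearMap.id_apply] at this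
    rw [← this]
    exact hE y.M hy r (q x)
  · exact ⟨s, fun n => LinearMap.congr_fun hs n⟩

theorem PiM.base (hS : SClosed S) {y z : ModA R} [Nontrivial z.M] (f : y.M →ₗ[R] z.M)
    (hf : IsIrred f) (hfi : Function.Injective f) (hy : TF S y.M) (hz : S z) : PiM S y := by
  refine ⟨?_, z, f, TT.of_mem hz, hfi⟩
  intro E _ _ _ _ Q _ _ i c hi hc hQ
  obtain ⟨q, hq⟩ := ((TT.of_mem hz).injF hS).extend i c hi hc hQ f
  rcases hf.2.2 (mkM E) i q (LinearMap.ext hq) with ⟨r, hr⟩ | ⟨s, hs⟩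
  · exact ⟨r, fun n => LinearMap.congr_fun hr n⟩
  · exfalso
    have hE : TF S E := TF.ext i c hi hc hQ hy
    obtain ⟨x, hx⟩ := exists_ne (0 : z.M)
    apply hx
    have := LinearMap.congr_fun hs x
    rw [LinearMap.id_apply] at this
    have h0 : s x = 0 := hE z hz s x
    rw [← this, LinearMap.comp_apply, h0, map_zero]

theorem PiE.stepa {u z : ModA R} (g : u.M →ₗ[R] z.M)
    (hg : IsIrred g) (hz : PiE S z) (X : ModA R) (hX : S X) (h : X.M →ₗ[R] u.M)
    (hgh : ∀ x, g (h x) = 0) (x : X.M) : h x = 0 := by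
  let v := LinearMap.range h
  let g' : u.M ⧸ v →ₗ[R] z.M := v.liftQ g (by rintro _ ⟨a, rfl⟩; exact hgh a)
  rcases hg.2.2 (mkM (u.M ⧸ v)) v.mkQ g' (by ext x; rfl) with ⟨r, hr⟩ | ⟨s, hs⟩
  · have := LinearMap.congr_fun hr (h x)
    have h1 : v.mkQ (h x) = 0 := (Submodule.Quotient.mk_eq_zero v).2 ⟨x, rfl⟩
    rw [LinearMap.comp_apply, LinearMap.id_apply] at this
    rw [← this]
    exact (congrArg r h1).trans (map_zero r)
  · exfalso
    obtain ⟨s', hs'⟩ := hz.1.lift h v.mkQ v.mkQ_surjective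
      (fun e => Submodule.Quotient.mk_eq_zero v) (TT.of_mem hX) s
    apply hg.2.1
    refine ⟨s', ?_⟩
    ext a
    have h1 : g' (v.mkQ (s' a)) = g' (s a) := congrArg g' (hs' a)
    exact h1.trans (LinearMap.congr_fun hs a)

theorem PiE.step (hS : SClosed S) {u z : ModA R} (g : u.M →ₗ[R] z.M)
    (hg : IsIrred g) (hz : PiE S z) : PiE S u := by
  have ha := fun X hX h hgh => PiE.stepa g hg hz X hX h hgh
  obtain ⟨hzp, Y, φ, hY, hφ⟩ := hz
  let d : u.M × Y.M →ₗ[R] z.M :=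
    g.comp (LinearMap.fst R u.M Y.M) - φ.comp (LinearMap.snd R u.M Y.M)
  have hd : ∀ t : LinearMap.ker d, g t.1.1 = φ t.1.2 := by
    intro t
    have : g t.1.1 - φ t.1.2 = 0 := t.2
    exact sub_eq_zero.1 this
  let fs : LinearMap.ker d →ₗ[R] u.M := (LinearMap.fst R u.M Y.M).comp (LinearMap.ker d).subtype
  let sn : LinearMap.ker d →ₗ[R] Y.M := (LinearMap.snd R u.M Y.M).comp (LinearMap.ker d).subtype
  have hfs : Function.Surjective fs := by
    intro a
    obtain ⟨b, hb⟩ := hφ (g a)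
    refine ⟨⟨(a, b), ?_⟩, rfl⟩
    simp [d, hb]
  have hTF : TF S (LinearMap.ker d) := by
    intro X hX t x
    have h2 : ∀ x, (t x).1.2 = 0 := fun x => hY X hX (sn.comp t) x
    have h1 : (t x).1.1 = 0 := ha X hX (fs.comp t) (fun x => by
      show g (t x).1.1 = 0
      rw [hd, h2, map_zero]) x
    exact Subtype.ext (Prod.ext h1 (h2 x))
  refine ⟨?_, mkM (LinearMap.ker d), fs, hTF, hfs⟩
  intro E _ _ _ _ K _ _ k p hp hk hK
  obtain ⟨q, hq⟩ := (hTF.extProj hS).lift k p hp hk hK fs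
  let V : Submodule R (E × Y.M) := LinearMap.range (q.prod sn)
  let ψ0 : E × Y.M →ₗ[R] z.M :=
    (g.comp p).comp (LinearMap.fst R E Y.M) - φ.comp (LinearMap.snd R E Y.M)
  let ψ : (E × Y.M) ⧸ V →ₗ[R] z.M := V.liftQ ψ0 (by
    rintro _ ⟨t, rfl⟩
    show g (p (q t)) - φ t.1.2 = 0
    rw [hq, ← hd, sub_eq_zero]
    rfl)
  let j : E →ₗ[R] (E × Y.M) ⧸ V := V.mkQ.comp (LinearMap.inl R E Y.M)
  have hψj : ∀ e, ψ (j e) = g (p e) := by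
    intro e
    show g (p e) - φ 0 = _
    simp
  have hψ : Function.Surjective ψ := by
    intro c
    obtain ⟨b, hb⟩ := hφ c
    refine ⟨V.mkQ (0, -b), ?_⟩
    show g (p 0) - φ (-b) = c
    simp [hb]
  have hker : ∀ x, ψ x = 0 → ∃ a, j (k a) = x := by
    intro x hx
    obtain ⟨⟨e, b⟩, rfl⟩ := V.mkQ_surjective x
    have hx : g (p e) - φ b = 0 := hx
    let t : LinearMap.ker d := ⟨(p e, b), hx⟩
    have hpe : p (e - q t) = 0 := by rw [map_sub, hq, sub_eq_zero]; rfl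
    obtain ⟨a, ha⟩ := (hk _).1 hpe
    refine ⟨a, ?_⟩
    rw [ha]
    refine (Submodule.Quotient.eq V).2 ⟨-t, ?_⟩
    refine Prod.ext ?_ ?_
    · simp
    · show -b = 0 - b
      simp
  obtain ⟨s, hs⟩ := hzp ((E × Y.M) ⧸ V) K (j.comp k) ψ hψ
    (fun x => ⟨hker x, by
      rintro ⟨a, rfl⟩
      rw [LinearMap.comp_apply, hψj, (hk (k a)).2 ⟨a, rfl⟩, map_zero]⟩) hK
  let j' : LinearMap.ker p →ₗ[R] (E × Y.M) ⧸ V := j.comp (LinearMap.ker p).subtype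
  have hj' : Function.Injective j' := by
    rw [injective_iff_map_eq_zero]
    rintro ⟨x, hx⟩ h
    obtain ⟨t, ht⟩ := (Submodule.Quotient.mk_eq_zero V).1 h
    have h1 : q t = x := congrArg Prod.fst ht
    have h2 : t.1.2 = 0 := congrArg Prod.snd ht
    have h3 : t.1.1 = 0 := by
      have := hq t
      rw [h1] at this
      exact this.symm.trans hx
    have h4 : t = 0 := Subtype.ext (Prod.ext h3 h2)
    apply Subtype.ext
    show x = 0
    rw [← h1, h4, map_zero]
  obtain ⟨ρ, hρ⟩ := codesc j' hj' (j - (s.comp ψ).comp j) (by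
    intro e
    obtain ⟨a, ha⟩ := hker (j e - s (ψ (j e))) (by rw [map_sub, hs, sub_self])
    exact ⟨⟨k a, (hk _).2 ⟨a, rfl⟩⟩, ha⟩)
  have hρ' : ∀ x : LinearMap.ker p, ρ x = x := by
    intro x
    apply hj'
    rw [hρ]
    have h1 : p x = 0 := x.2
    show j x - s (ψ (j x)) = j x
    rw [hψj, h1, map_zero, map_zero, sub_zero]
  obtain ⟨σ, hσ⟩ := desc p hp (LinearMap.id - (LinearMap.ker p).subtype.comp ρ) (fun x hx => by
    have := hρ' ⟨x, hx⟩
    show x - (ρ x).1 = 0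
    rw [this, sub_self])
  refine ⟨σ, fun n => ?_⟩
  obtain ⟨x, rfl⟩ := hp n
  have h1 : p (ρ x).1 = 0 := (ρ x).2
  rw [hσ]
  show p (x - (ρ x).1) = _
  rw [map_sub, h1, sub_zero]

theorem PiM.stepa {y u : ModA R} (g : y.M →ₗ[R] u.M)
    (hg : IsIrred g) (hy : PiM S y) (N : Type u) [AddCommGroup N] [Module R N] (hN : TF S N)
    (h : u.M →ₗ[R] N) (hgh : ∀ x, h (g x) = 0) (x : u.M) : h x = 0 := by
  let v := LinearMap.ker h
  let g' : y.M →ₗ[R] v := g.codRestrict v hgh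
  rcases hg.2.2 (mkM v) g' v.subtype (by ext x; rfl) with ⟨r, hr⟩ | ⟨s, hs⟩
  · exfalso
    obtain ⟨r', hr'⟩ := hy.1.extend v.subtype h v.injective_subtype
      (fun e => ⟨fun he => ⟨⟨e, he⟩, rfl⟩, by rintro ⟨a, rfl⟩; exact a.2⟩) hN r
    apply hg.1
    refine ⟨r', ?_⟩
    ext a
    exact (hr' (g' a)).trans (LinearMap.congr_fun hr a)
  · have := LinearMap.congr_fun hs x
    rw [LinearMap.id_apply] at this
    rw [← this]
    exact (s x).2

theorem PiM.step (hS : SClosed S) {y u : ModA R} (g : y.M →ₗ[R] u.M)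
    (hg : IsIrred g) (hy : PiM S y) : PiM S u := by
  have ha := fun (N : Type u) [AddCommGroup N] [Module R N] (hN : TF S N) =>
    PiM.stepa g hg hy N hN
  obtain ⟨hyi, Z, ψ, hZ, hψ⟩ := hy
  let V : Submodule R (u.M × Z.M) := LinearMap.range (g.prod ψ)
  let jl : u.M →ₗ[R] (u.M × Z.M) ⧸ V := V.mkQ.comp (LinearMap.inl R u.M Z.M)
  let jr : Z.M →ₗ[R] (u.M × Z.M) ⧸ V := V.mkQ.comp (LinearMap.inr R u.M Z.M)
  have hlr : ∀ b ζ, V.mkQ (b, ζ) = jl b + jr ζ := by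
    intro b ζ
    simp only [jl, jr, LinearMap.comp_apply, ← map_add]
    simp
  have hga : ∀ a, jl (g a) = - jr (ψ a) := by
    intro a
    rw [eq_neg_iff_add_eq_zero, ← hlr]
    exact (Submodule.Quotient.mk_eq_zero V).2 ⟨a, rfl⟩
  have hmem : ∀ b ζ, jl b + jr ζ = 0 → ∃ a, g a = b ∧ ψ a = ζ := by
    intro b ζ h
    rw [← hlr] at h
    obtain ⟨a, ha⟩ := (Submodule.Quotient.mk_eq_zero V).1 h
    exact ⟨a, congrArg Prod.fst ha, congrArg Prod.snd ha⟩
  have hTT : TT S ((u.M × Z.M) ⧸ V) := by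
    intro N _ _ hN t x
    obtain ⟨⟨b, ζ⟩, rfl⟩ := V.mkQ_surjective x
    have h1 : ∀ ζ, t (jr ζ) = 0 := fun ζ => hZ N hN (t.comp jr) ζ
    have h2 : t (jl b) = 0 := ha N hN (t.comp jl) (fun a => by
      rw [LinearMap.comp_apply, hga, map_neg, h1, neg_zero]) b
    rw [hlr, map_add, h1, h2, add_zero]
  have hjl : Function.Injective jl := by
    rw [injective_iff_map_eq_zero]
    intro b hb
    obtain ⟨a, h1, h2⟩ := hmem b 0 (by rw [hb, map_zero, add_zero])
    have : a = 0 := hψ (by rw [h2, map_zero])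
    rw [← h1, this, map_zero]
  refine ⟨?_, mkM ((u.M × Z.M) ⧸ V), jl, hTT, hjl⟩
  intro E _ _ _ _ Q _ _ i c hi hc hQ
  obtain ⟨j, hj⟩ := (hTT.injF hS).extend i c hi hc hQ jl
  let d : E × Z.M →ₗ[R] (u.M × Z.M) ⧸ V :=
    j.comp (LinearMap.fst R E Z.M) + jr.comp (LinearMap.snd R E Z.M)
  let iy : y.M →ₗ[R] LinearMap.ker d := LinearMap.codRestrict _ ((i.comp g).prod ψ) (by
    intro a
    show j (i (g a)) + jr (ψ a) = 0
    rw [hj, hga, neg_add_cancel])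
  obtain ⟨ρ, hρ⟩ := hyi (LinearMap.ker d) Q iy
    (c.comp ((LinearMap.fst R E Z.M).comp (LinearMap.ker d).subtype))
    (by
      rw [injective_iff_map_eq_zero]
      intro a h
      have h1 : ψ a = 0 := congrArg (fun w => w.1.2) h
      exact hψ (by rw [h1, map_zero]))
    (by
      rintro ⟨⟨e, ζ⟩, h⟩
      constructor
      · intro he
        have he : c e = 0 := he
        obtain ⟨b, rfl⟩ := (hc e).1 he
        have h : j (i b) + jr ζ = 0 := h
        rw [hj] at h
        obtain ⟨a, rfl, rfl⟩ := hmem _ _ h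
        exact ⟨a, rfl⟩
      · rintro ⟨a, ha⟩
        rw [← ha]
        exact (hc _).2 ⟨g a, rfl⟩) hQ
  let dd : E × (u.M × Z.M) →ₗ[R] (u.M × Z.M) ⧸ V :=
    j.comp (LinearMap.fst R E (u.M × Z.M)) - V.mkQ.comp (LinearMap.snd R E (u.M × Z.M))
  let pe : LinearMap.ker dd →ₗ[R] E :=
    (LinearMap.fst R E (u.M × Z.M)).comp (LinearMap.ker dd).subtype
  let pb : LinearMap.ker dd →ₗ[R] u.M := (LinearMap.fst R u.M Z.M).comp
    ((LinearMap.snd R E (u.M × Z.M)).comp (LinearMap.ker dd).subtype)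
  let pζ : LinearMap.ker dd →ₗ[R] Z.M := (LinearMap.snd R u.M Z.M).comp
    ((LinearMap.snd R E (u.M × Z.M)).comp (LinearMap.ker dd).subtype)
  have hdd : ∀ w, j (pe w) = jl (pb w) + jr (pζ w) := by
    intro w
    have : j (pe w) - V.mkQ (pb w, pζ w) = 0 := w.2
    rw [sub_eq_zero] at this
    rw [this, hlr]
  let m0 : LinearMap.ker dd →ₗ[R] LinearMap.ker d :=
    LinearMap.codRestrict _ ((pe - i.comp pb).prod (-pζ)) (by
      intro w
      show j (pe w - i (pb w)) + jr (- pζ w) = 0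
      rw [map_sub, hdd, hj, map_neg]
      abel)
  have hpe : Function.Surjective pe := by
    intro e
    obtain ⟨w, hw⟩ := V.mkQ_surjective (j e)
    exact ⟨⟨(e, w), by simp [dd, hw]⟩, rfl⟩
  obtain ⟨r, hr⟩ := desc pe hpe (pb + (g.comp ρ).comp m0) (by
    intro w hw
    have h1 := hdd w
    rw [hw, map_zero] at h1
    obtain ⟨a, h2, h3⟩ := hmem _ _ h1.symm
    have h4 : m0 w = - iy a := by
      apply Subtype.ext
      refine Prod.ext ?_ ?_
      · show pe w - i (pb w) = - i (g a)
        rw [hw, h2, zero_sub]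
      · show - pζ w = - ψ a
        rw [h3]
    show pb w + g (ρ (m0 w)) = 0
    rw [h4, map_neg, hρ, map_neg, h2, add_neg_cancel])
  refine ⟨r, fun b => ?_⟩
  let w : LinearMap.ker dd := ⟨(i b, (b, 0)), by
    show j (i b) - V.mkQ (b, 0) = 0
    rw [hlr, hj, map_zero, add_zero, sub_self]⟩
  have h1 : m0 w = 0 := by
    apply Subtype.ext
    refine Prod.ext ?_ ?_
    · show i b - i b = 0
      rw [sub_self]
    · show - (0 : Z.M) = 0
      rw [neg_zero]
  have h2 := hr w
  have h3 : (pb + (g.comp ρ).comp m0) w = b := by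
    show b + g (ρ (m0 w)) = b
    rw [h1, map_zero, map_zero, add_zero]
  rw [h3] at h2
  exact h2

end StepPart


section CommonCycle
open Relation
variable {R : Type u} [Ring R]

theorem IsIrred.conj {X X' Y Y' : ModA R} (a : X.M ≃ₗ[R] X'.M) (b : Y.M ≃ₗ[R] Y'.M)
    {f : X.M →ₗ[R] Y.M} (h : IsIrred f) :
    IsIrred (X := X') (Y := Y') ((b.toLinearMap.comp f).comp a.symm.toLinearMap) := by
  refine ⟨?_, ?_, ?_⟩
  · rintro ⟨r, hr⟩
    apply h.1
    refine ⟨(a.symm.toLinearMap.comp r).comp b.toLinearMap, ?_⟩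
    ext x
    have := LinearMap.congr_fun hr (a x)
    simp only [LinearMap.comp_apply, LinearEquiv.coe_coe, LinearMap.id_apply,
      LinearEquiv.symm_apply_apply] at this ⊢
    rw [this, LinearEquiv.symm_apply_apply]
  · rintro ⟨r, hr⟩
    apply h.2.1
    refine ⟨(a.symm.toLinearMap.comp r).comp b.toLinearMap, ?_⟩
    ext x
    have := LinearMap.congr_fun hr (b x)
    simp only [LinearMap.comp_apply, LinearEquiv.coe_coe, LinearMap.id_apply] at this ⊢
    exact b.injective this
  · intro Z g k hgk
    rcases h.2.2 Z (g.comp a.toLinearMap) (b.symm.toLinearMap.comp k) (by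
      ext x
      have := LinearMap.congr_fun hgk (a x)
      simp only [LinearMap.comp_apply, LinearEquiv.coe_coe,
        LinearEquiv.symm_apply_apply] at this ⊢
      rw [this, LinearEquiv.symm_apply_apply]) with ⟨r, hr⟩ | ⟨s, hs⟩
    · left
      refine ⟨a.toLinearMap.comp r, ?_⟩
      ext x
      have := LinearMap.congr_fun hr (a.symm x)
      simp only [LinearMap.comp_apply, LinearEquiv.coe_coe, LinearMap.id_apply,
        LinearEquiv.apply_symm_apply] at this ⊢
      rw [this, LinearEquiv.apply_symm_apply]
    · right
      refine ⟨s.comp b.symm.toLinearMap, ?_⟩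
      ext x
      have := LinearMap.congr_fun hs (b.symm x)
      simp only [LinearMap.comp_apply, LinearEquiv.coe_coe, LinearMap.id_apply] at this ⊢
      exact b.symm.injective this

theorem ARArrow.transport {x y : ARVertex R} (h : ARArrow x y) :
    ∃ f : x.rep.1.M →ₗ[R] y.rep.1.M, IsIrred f := by
  obtain ⟨X, Y, f, hf, hx, hy⟩ := h
  obtain ⟨a⟩ := mk_eq_iff.1 (hx.trans x.mk_rep.symm)
  obtain ⟨b⟩ := mk_eq_iff.1 (hy.trans y.mk_rep.symm)
  exact ⟨_, hf.conj a b⟩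

theorem not_bij_comp_right {X Y Z : ModA R} (hX : X.IsIndec) (hY : Y.IsIndec)
    (g : X.M →ₗ[R] Y.M) (hg : ¬ Function.Bijective g) (h : Y.M →ₗ[R] Z.M) :
    ¬ Function.Bijective (h.comp g) := by
  intro hb
  have := hX.1
  obtain ⟨r, hr⟩ := bij_splitMono (X := X) (Y := Z) hb
  exact hg (splitMono_bij hY ⟨r.comp h, hr⟩)

theorem not_bij_comp_left {X Y Z : ModA R} (hY : Y.IsIndec) (hZ : Z.IsIndec)
    (g : X.M →ₗ[R] Y.M) (h : Y.M →ₗ[R] Z.M) (hh : ¬ Function.Bijective h) :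
    ¬ Function.Bijective (h.comp g) := by
  intro hb
  have := hZ.1
  obtain ⟨r, hr⟩ := bij_splitEpi (X := X) (Y := Z) hb
  exact hh (splitEpi_bij hY ⟨g.comp r, hr⟩)

theorem rtgN {x y : ARVertex R} (h : ReflTransGen ARArrow x y) : ReflTransGen NStep x y :=
  ReflTransGen.mono (fun _ _ h => h.nstep) _ _ h

theorem common_cycle {y z : ARVertex R} (h : ARArrow y z) (hy : OnARCycle y)
    (hz : OnARCycle z) : ReflTransGen NStep z y := by
  by_contra hcon
  let S : ModA R → Prop := fun X => ∃ hX : X.IsIndec, ReflTransGen NStep z (ARVertex.mk ⟨X, hX⟩)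
  have hS : SClosed S := by
    rintro X Y ⟨hX, h1⟩ hY f hf
    exact ⟨hY, h1.trans (nreach (X := ⟨X, hX⟩) (Y := ⟨Y, hY⟩) f hf)⟩
  have hmem : ∀ x : ARVertex R, ReflTransGen NStep z x → S x.rep.1 := by
    intro x hx
    refine ⟨x.rep.2, ?_⟩
    have : ARVertex.mk ⟨x.rep.1, x.rep.2⟩ = x := x.mk_rep
    rwa [this]
  have hnmem : ∀ x : ARVertex R, ReflTransGen NStep x y → ¬ S x.rep.1 := by
    rintro x hx ⟨h1, h2⟩
    have : ARVertex.mk ⟨x.rep.1, h1⟩ = x := x.mk_rep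
    rw [this] at h2
    exact hcon (h2.trans hx)
  have hzS : S z.rep.1 := hmem z ReflTransGen.refl
  have hyT : TF S y.rep.1.M := TF.of_not_mem hS y.rep.2 (hnmem y ReflTransGen.refl)
  have ny := y.rep.2.1
  have nz := z.rep.2.1
  obtain ⟨f, hf⟩ := h.transport
  rcases hf.inj_or_surj with hfi | hfs
  · have hb := PiM.base hS f hf hfi hyT hzS
    have key : ∀ a, TransGen ARArrow y a → ReflTransGen ARArrow a y →
        PiM S a.rep.1 ∧ ∃ k : y.rep.1.M →ₗ[R] a.rep.1.M, ¬ Function.Bijective k ∧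
        ∀ (N : Type u) [AddCommGroup N] [Module R N], TF S N → ∀ t : a.rep.1.M →ₗ[R] N,
          (∀ x, t (k x) = 0) → ∀ x, t x = 0 := by
      intro a ha
      induction ha with
      | single hya =>
        intro _
        obtain ⟨g, hg⟩ := hya.transport
        exact ⟨hb.step hS g hg, g, hg.not_bij, fun N _ _ hN t => hb.stepa g hg N hN t⟩
      | tail _ hbc ih =>
        intro hcy
        obtain ⟨hP, k, hk, hk'⟩ := ih (ReflTransGen.head hbc hcy)
        obtain ⟨g, hg⟩ := hbc.transport
        refine ⟨hP.step hS g hg, g.comp k,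
          not_bij_comp_left (ARVertex.rep _).2 (ARVertex.rep _).2 k g hg.not_bij,
          fun N _ _ hN t ht => ?_⟩
        apply hP.stepa g hg N hN t
        exact hk' N hN (t.comp g) ht
    obtain ⟨_, k, hk, hk'⟩ := key y hy ReflTransGen.refl
    obtain ⟨n, hn⟩ := fitting y.rep.2 k hk
    have : ∀ n : ℕ, ∀ t : Module.End R y.rep.1.M, (∀ x, t ((k ^ n : Module.End R _) x) = 0) →
        ∀ x, t x = 0 := by
      intro n
      induction n with
      | zero => intro t ht; exact ht
      | succ n ih =>
        intro t ht
        apply hk' _ hyT t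
        exact ih (t * k) (fun x => by
          have := ht x
          rw [pow_succ'] at this
          exact this)
    obtain ⟨x, hx⟩ := exists_ne (0 : y.rep.1.M)
    exact hx (this n 1 (fun x => by rw [hn]; rfl) x)
  · have hb := PiE.base hS f hf hfs hyT hzS
    have key : ∀ a, TransGen ARArrow a z → ReflTransGen ARArrow z a →
        PiE S a.rep.1 ∧ ∃ k : a.rep.1.M →ₗ[R] z.rep.1.M, ¬ Function.Bijective k ∧
        ∀ X : ModA R, S X → ∀ t : X.M →ₗ[R] a.rep.1.M,
          (∀ x, k (t x) = 0) → ∀ x, t x = 0 := by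
      intro a ha
      induction ha using TransGen.head_induction_on with
      | single hya =>
        intro _
        obtain ⟨g, hg⟩ := hya.transport
        exact ⟨hb.step hS g hg, g, hg.not_bij, fun X hX t => hb.stepa g hg X hX t⟩
      | head hbc _ ih =>
        intro hcy
        obtain ⟨hP, k, hk, hk'⟩ := ih (ReflTransGen.tail hcy hbc)
        obtain ⟨g, hg⟩ := hbc.transport
        refine ⟨hP.step hS g hg, k.comp g,
          not_bij_comp_right (ARVertex.rep _).2 (ARVertex.rep _).2 g hg.not_bij k,
          fun X hX t ht => ?_⟩
        apply hP.stepa g hg X hX t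
        exact hk' X hX (g.comp t) ht
    obtain ⟨_, k, hk, hk'⟩ := key z hz ReflTransGen.refl
    obtain ⟨n, hn⟩ := fitting z.rep.2 k hk
    have : ∀ n : ℕ, ∀ t : Module.End R z.rep.1.M, (∀ x, (k ^ n : Module.End R _) (t x) = 0) →
        ∀ x, t x = 0 := by
      intro n
      induction n with
      | zero => intro t ht; exact ht
      | succ n ih =>
        intro t ht
        apply hk' _ hzS t
        exact ih (k * t) (fun x => by
          have := ht x
          rw [pow_succ] at this
          exact this)
    obtain ⟨x, hx⟩ := exists_ne (0 : z.rep.1.M)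
    exact hx (this n 1 (fun x => by rw [hn]; rfl) x)

/-- The component is the mutual reachability class of a cycle-finite vertex. -/
theorem comp_mutual {Γ : Set (ARVertex R)} (hΓ : IsCyclicComponent Γ) {x0 : ARVertex R}
    (h0 : x0 ∈ Γ) (hcf : IsCycleFiniteVertex x0) {x : ARVertex R} (hx : x ∈ Γ) :
    ReflTransGen ARArrow x0 x ∧ ReflTransGen ARArrow x x0 := by
  have h := hΓ.2.2.2 x0 h0 x hx
  induction h with
  | refl => exact ⟨ReflTransGen.refl, ReflTransGen.refl⟩
  | tail hab hbc ih =>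
    rename_i b c
    have hb : b ∈ Γ := by
      clear ih hbc hx
      induction hab with
      | refl => exact h0
      | tail _ hbc ih => exact hΓ.2.2.1 _ ih _ hbc.2.1 hbc.2.2
    obtain ⟨h1, h2⟩ := ih hb
    apply cf_path hcf
    · refine (rtgN h1).trans ?_
      rcases hbc.2.2 with h | h
      · exact ReflTransGen.single h.nstep
      · exact common_cycle h hbc.2.1 hbc.1
    · refine ReflTransGen.trans ?_ (rtgN h2)
      rcases hbc.2.2 with h | h
      · exact common_cycle h hbc.1 hbc.2.1
      · exact ReflTransGen.single h.nstep

theorem mem_comp_of_mutual {Γ : Set (ARVertex R)} (hΓ : IsCyclicComponent Γ) {x0 : ARVertex R}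
    (h0 : x0 ∈ Γ) {x : ARVertex R} (h1 : ReflTransGen ARArrow x0 x)
    (h2 : ReflTransGen ARArrow x x0) : x ∈ Γ := by
  induction h1 with
  | refl => exact h0
  | tail hab hbc ih =>
    have hb := ih (ReflTransGen.head hbc h2)
    refine hΓ.2.2.1 _ hb _ ?_ (Or.inl hbc)
    exact TransGen.tail' (h2.trans hab) hbc

/-- Convexity of the component with respect to paths of nonzero maps. -/
theorem comp_convex {Γ : Set (ARVertex R)} (hΓ : IsCycleFiniteCyclicComponent Γ)
    {x w y : ARVertex R} (hx : x ∈ Γ) (hy : y ∈ Γ) (h1 : ReflTransGen NStep x w)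
    (h2 : ReflTransGen NStep w y) : w ∈ Γ := by
  obtain ⟨hc, x0, h0, hcf⟩ := hΓ
  obtain ⟨a, _⟩ := comp_mutual hc h0 hcf hx
  obtain ⟨_, b⟩ := comp_mutual hc h0 hcf hy
  obtain ⟨c, d⟩ := cf_path hcf ((rtgN a).trans h1) (h2.trans (rtgN b))
  exact mem_comp_of_mutual hc h0 c d

end CommonCycle


section AlgPart
open Relation
variable {A : Type u} [Ring A]

/-- Left multiplication as a map of right modules. -/
def Lm (t : A) : A →ₗ[Aᵐᵒᵖ] A where
  toFun x := t * x
  map_add' x y := mul_add t x y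
  map_smul' a x := by simp [MulOpposite.smul_eq_mul_unop, mul_assoc]

@[simp] theorem Lm_apply (t x : A) : Lm t x = t * x := rfl

theorem Lm_pow (t : A) (n : ℕ) (x : A) : ((Lm t : Module.End Aᵐᵒᵖ A) ^ n) x = t ^ n * x := by
  induction n with
  | zero => simp
  | succ n ih => rw [pow_succ', pow_succ', Module.End.mul_apply, ih, Lm_apply, mul_assoc]

theorem IsPrimitiveIdempotent.split {e : A} (he : IsPrimitiveIdempotent A e) {f : A}
    (hf : f * f = f) (h1 : e * f = f) (h2 : f * e = f) : f = 0 ∨ f = e := by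
  have hee : e * e = e := he.1
  rcases he.2.2 f (e - f) hf
    (by
      show (e - f) * (e - f) = e - f
      rw [mul_sub, sub_mul, sub_mul, hee, h1, h2, hf]; abel)
    (by rw [mul_sub, h2, hf, sub_self]) (by rw [sub_mul, h1, hf, sub_self])
    (by abel) with h | h
  · exact Or.inl h
  · exact Or.inr (sub_eq_zero.1 h).symm

variable [IsNoetherian Aᵐᵒᵖ A] [IsArtinian Aᵐᵒᵖ A]

theorem prim_right_inv {e : A} (he : IsPrimitiveIdempotent A e) {t : A} (h1 : e * t = t)
    (h2 : t * e = t) (ht : ∀ n, t ^ n ≠ 0) : ∃ s, e * s = s ∧ s * e = s ∧ t * s = e := by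
  have hee : e * e = e := he.1
  obtain ⟨n, hn, hn0⟩ := ((LinearMap.eventually_isCompl_ker_pow_range_pow
    (Lm t : Module.End Aᵐᵒᵖ A)).and (Filter.eventually_gt_atTop 0)).exists
  obtain ⟨m, rfl⟩ : ∃ m, n = m + 1 := ⟨n - 1, by omega⟩
  let P : Module.End Aᵐᵒᵖ A := Submodule.projection _ _ hn.symm
  have hP : ∀ x, P x = P 1 * x := by
    intro x
    have := P.map_smul (MulOpposite.op x) 1
    simpa [MulOpposite.smul_eq_mul_unop] using this
  have hPP : ∀ x, P (P x) = P x := fun x =>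
    LinearMap.congr_fun (Submodule.isIdempotentElem_projection hn.symm) x
  have hPr : ∀ x, ∃ b, t ^ (m + 1) * b = P x := by
    intro x
    obtain ⟨b, hb⟩ : P x ∈ LinearMap.range _ := Submodule.projection_apply_mem hn.symm x
    exact ⟨b, by rw [← Lm_pow]; exact hb⟩
  have heP : ∀ x, e * P x = P x := by
    intro x
    obtain ⟨b, hb⟩ := hPr x
    rw [← hb, pow_succ', ← mul_assoc, ← mul_assoc, h1]
  have hte : t ^ (m + 1) * e = t ^ (m + 1) := by rw [pow_succ, mul_assoc, h2]
  rcases he.split (f := P e)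
    (by
      have : P e * P e = P (P e) * e := by
        rw [hP (P e), mul_assoc, hP e, mul_assoc, mul_assoc, ← mul_assoc (P 1) (P 1)]
        have h3 : P 1 * P 1 = P 1 := by rw [← hP, hPP]
        have h4 : e * P 1 = P 1 := heP 1
        rw [h3]
        rw [← mul_assoc e, h4, ← mul_assoc, ← mul_assoc, h3, mul_assoc, hee]
      rw [this, hPP, hP e, mul_assoc, hee])
    (heP e) (by rw [hP e, mul_assoc, hee]) with h | h
  · exfalso
    apply ht (m + 1)
    have h3 : e - P e ∈ LinearMap.ker ((Lm t : Module.End Aᵐᵒᵖ A) ^ (m + 1)) :=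
      Submodule.sub_projection_mem hn.symm e
    rw [LinearMap.mem_ker, Lm_pow, h, sub_zero, hte] at h3
    exact h3
  · obtain ⟨b, hb⟩ := hPr e
    rw [h] at hb
    refine ⟨e * (t ^ m * b) * e, ?_, ?_, ?_⟩
    · rw [← mul_assoc, ← mul_assoc, hee]
    · rw [mul_assoc, hee]
    · rw [← mul_assoc, ← mul_assoc, h2, ← mul_assoc, ← pow_succ', hb, hee]

theorem prim_inv {e : A} (he : IsPrimitiveIdempotent A e) {t : A} (h1 : e * t = t)
    (h2 : t * e = t) (ht : ∀ n, t ^ n ≠ 0) :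
    ∃ s, e * s = s ∧ s * e = s ∧ t * s = e ∧ s * t = e := by
  obtain ⟨s, hs1, hs2, hts⟩ := prim_right_inv he h1 h2 ht
  have hpow : ∀ n, t ^ n * s ^ n * e = e := by
    intro n
    induction n with
    | zero => simp
    | succ n ih =>
      rw [pow_succ, pow_succ', mul_assoc (t ^ n), ← mul_assoc t, hts]
      rw [← mul_assoc]
      cases n with
      | zero =>
        have hee : e * e = e := he.1
        simpa using hee
      | succ n =>
        have : t ^ (n + 1) * e = t ^ (n + 1) := by rw [pow_succ, mul_assoc, h2]
        rw [this, ih]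
  obtain ⟨c, hc1, hc2, hsc⟩ := prim_right_inv he hs1 hs2 (fun n hn => by
    have := hpow n
    rw [hn, mul_zero, zero_mul] at this
    exact he.2.1 this.symm)
  refine ⟨s, hs1, hs2, hts, ?_⟩
  have : t = c := by rw [← h2, ← hsc, ← mul_assoc, hts, hc1]
  rw [this, hsc]

theorem jac_mul_left {x : A} (h : x ∈ jacobsonRad A) (a : A) : a * x ∈ jacobsonRad A :=
  Ideal.mul_mem_left _ a h

theorem jac_mul_right {x : A} (h : x ∈ jacobsonRad A) (a : A) : x * a ∈ jacobsonRad A := by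
  have : (jacobsonRad A).IsTwoSided := by unfold jacobsonRad; infer_instance
  exact Ideal.mul_mem_right a _ h

theorem jac_nilp [IsArtinianRing A] {x : A} (h : x ∈ jacobsonRad A) : ∃ n, x ^ n = 0 := by
  obtain ⟨n, hn⟩ := IsArtinianRing.isNilpotent_jacobson_bot (R := A)
  refine ⟨n, ?_⟩
  have : x ^ n ∈ (jacobsonRad A) ^ n := Ideal.pow_mem_pow h n
  unfold jacobsonRad at this
  rw [hn] at this
  exact this

theorem prim_right_inv' {e : A} (he : IsPrimitiveIdempotent A e) {x : A} (h1 : e * x = x)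
    (hx : x ∉ jacobsonRad A) : ∃ c, x * c = e := by
  have : ∃ y, ∀ n, (y * x) ^ n ≠ 0 := by
    by_contra hcon
    push Not at hcon
    apply hx
    unfold jacobsonRad
    rw [Ideal.mem_jacobson_iff]
    intro y
    obtain ⟨n, hn⟩ := hcon (-y)
    have hu : IsUnit (1 - (-y) * x) := IsNilpotent.isUnit_one_sub ⟨n, hn⟩
    obtain ⟨z, hz⟩ := hu.exists_left_inv
    refine ⟨z, ?_⟩
    rw [mul_sub, mul_one] at hz
    have : z * y * x + z - 1 = 0 := by
      rw [← hz]; noncomm_ring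
    rw [this]
    exact zero_mem _
  obtain ⟨y, hy⟩ := this
  have hp : ∀ n, (y * x) ^ (n + 1) = y * (x * y * e) ^ n * x := by
    intro n
    induction n with
    | zero => simp
    | succ n ih =>
      rw [pow_succ, ih, pow_succ]
      simp only [mul_assoc, h1]
  obtain ⟨s, -, -, hs⟩ := prim_right_inv he (t := x * y * e)
    (by rw [← mul_assoc, ← mul_assoc, h1]) (by rw [mul_assoc, show e * e = e from he.1])
    (fun n hn => hy (n + 1) (by rw [hp, hn, mul_zero, zero_mul]))
  exact ⟨y * e * s, by rw [← mul_assoc, ← mul_assoc]; exact hs⟩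

theorem prim_loc {e f : A} (he : IsPrimitiveIdempotent A e) (hf : IsPrimitiveIdempotent A f)
    {x : A} (h1 : e * x = x) (h2 : x * f = x) (hx : x ∉ jacobsonRad A) :
    ∃ w, f * w = w ∧ w * e = w ∧ x * w = e ∧ w * x = f := by
  have hee : e * e = e := he.1
  have hff : f * f = f := hf.1
  obtain ⟨c, hc⟩ := prim_right_inv' he h1 hx
  have hxw : x * (f * c * e) = e := by rw [← mul_assoc, ← mul_assoc, h2, hc, hee]
  refine ⟨f * c * e, by rw [← mul_assoc, ← mul_assoc, hff], by rw [mul_assoc, hee], hxw, ?_⟩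
  rcases hf.split (f := f * c * e * x)
    (by rw [mul_assoc, ← mul_assoc x, hxw, h1])
    (by rw [← mul_assoc, ← mul_assoc, ← mul_assoc, hff]) (by rw [mul_assoc, h2]) with h | h
  · exfalso
    apply hx
    have : x = x * (f * c * e * x) := by rw [← mul_assoc, hxw, h1]
    rw [this, h, mul_zero]
    exact zero_mem _
  · exact h

theorem mem_span_right {e x : A} (he : e * e = e) :
    x ∈ Submodule.span Aᵐᵒᵖ {e} ↔ e * x = x := by
  rw [Submodule.mem_span_singleton]
  constructor
  · rintro ⟨a, rfl⟩
    simp [MulOpposite.smul_eq_mul_unop, ← mul_assoc, he]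
  · intro h
    exact ⟨MulOpposite.op x, by simpa [MulOpposite.smul_eq_mul_unop] using h⟩

theorem basic_jac (hb : IsBasicAlgebra A) {e f : A} (he : IsPrimitiveIdempotent A e)
    (hf : IsPrimitiveIdempotent A f) (hef : e * f = 0) (hfe : f * e = 0) (a : A) :
    e * a * f ∈ jacobsonRad A := by
  have hee : e * e = e := he.1
  have hff : f * f = f := hf.1
  by_contra hx
  obtain ⟨w, hw1, hw2, hxw, hwx⟩ := prim_loc he hf (x := e * a * f)
    (by rw [← mul_assoc, ← mul_assoc, hee]) (by rw [mul_assoc, hff]) hx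
  apply hb
  refine ⟨e, f, he, hf, hef, hfe, ⟨LinearEquiv.ofLinear
    ((Lm w).restrict (fun x _ => (mem_span_right hff).2 (by
      rw [Lm_apply, ← mul_assoc, hw1])))
    ((Lm (e * a * f)).restrict (fun x _ => (mem_span_right hee).2 (by
      rw [Lm_apply]; simp only [← mul_assoc, hee])))
    ?_ ?_⟩⟩
  · ext ⟨x, hx⟩
    have := (mem_span_right hff).1 hx
    show w * (e * a * f * x) = x
    rw [← mul_assoc, hwx, this]
  · ext ⟨x, hx⟩
    have := (mem_span_right hee).1 hx
    show e * a * f * (w * x) = x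
    rw [← mul_assoc, hxw, this]

/-- Decomposition of idempotents. -/
theorem idem_decomp (e : A) (he : e * e = e) : ∃ (I : Type) (_ : Fintype I) (E : I → A),
    (∀ i, IsPrimitiveIdempotent A (E i)) ∧ (∀ i j, i ≠ j → E i * E j = 0) ∧ ∑ i, E i = e := by
  induction h : (Submodule.span Aᵐᵒᵖ {e} : Submodule Aᵐᵒᵖ A) using WellFoundedLT.induction
    generalizing e with
  | ind N ih =>
  subst h
  by_cases h0 : e = 0
  · exact ⟨Empty, inferInstance, fun i => i.elim, fun i => i.elim, fun i => i.elim,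
      by simp [h0]⟩
  by_cases hp : IsPrimitiveIdempotent A e
  · exact ⟨Unit, inferInstance, fun _ => e, fun _ => hp, fun i j h => (h rfl).elim, by simp⟩
  have : ∃ f g : A, f * f = f ∧ g * g = g ∧ f * g = 0 ∧ g * f = 0 ∧ e = f + g ∧ f ≠ 0 ∧ g ≠ 0 := by
    by_contra hcon
    apply hp
    refine ⟨he, h0, fun f g hf hg hfg hgf h => ?_⟩
    by_contra h2
    push Not at h2
    exact hcon ⟨f, g, hf, hg, hfg, hgf, h, h2.1, h2.2⟩
  obtain ⟨f, g, hf, hg, hfg, hgf, rfl, hf0, hg0⟩ := this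
  have key : ∀ f g : A, f * f = f → g * g = g → f * g = 0 → g * f = 0 → g ≠ 0 →
      (Submodule.span Aᵐᵒᵖ {f} : Submodule Aᵐᵒᵖ A) < Submodule.span Aᵐᵒᵖ {f + g} := by
    intro f g hf hg hfg hgf hg0
    have hfg' : (f + g) * (f + g) = f + g := by
      rw [mul_add, add_mul, add_mul, hf, hg, hfg, hgf]; simp
    refine lt_of_le_of_ne ?_ ?_
    · rw [Submodule.span_singleton_le_iff_mem, mem_span_right hfg', add_mul, hf, hgf, add_zero]
    · intro h
      have h1 : g ∈ (Submodule.span Aᵐᵒᵖ {f} : Submodule Aᵐᵒᵖ A) := by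
        rw [h, mem_span_right hfg', add_mul, hfg, hg, zero_add]
      rw [mem_span_right hf, hfg] at h1
      exact hg0 h1.symm
  obtain ⟨I, _, E, hE, hEo, hEs⟩ := ih _ (key f g hf hg hfg hgf hg0) f hf rfl
  obtain ⟨I', _, E', hE', hEo', hEs'⟩ := ih _ (add_comm f g ▸ key g f hg hf hgf hfg hf0) g hg rfl
  have sub : ∀ {J : Type} [Fintype J] (F : J → A) (h : A), (∀ i, IsPrimitiveIdempotent A (F i)) →
      (∀ i j, i ≠ j → F i * F j = 0) → ∑ i, F i = h → ∀ i, h * F i = F i ∧ F i * h = F i := by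
    classical
    intro J _ F h hF hFo hFs i
    rw [← hFs, Finset.sum_mul, Finset.mul_sum]
    rw [Finset.sum_eq_single i (fun j _ hj => hFo j i hj) (by simp),
      Finset.sum_eq_single i (fun j _ hj => hFo i j hj.symm) (by simp)]
    exact ⟨(hF i).1, (hF i).1⟩
  have s1 := sub E f hE hEo hEs
  have s2 := sub E' g hE' hEo' hEs'
  refine ⟨I ⊕ I', inferInstance, Sum.elim E E', ?_, ?_, ?_⟩
  · rintro (i | i)
    · exact hE i
    · exact hE' i
  · rintro (i | i) (j | j) hij
    · exact hEo i j (fun h => hij (by rw [h]))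
    · show E i * E' j = 0
      rw [← (s1 i).2, ← (s2 j).1, mul_assoc, ← mul_assoc f, hfg, zero_mul, mul_zero]
    · show E' i * E j = 0
      rw [← (s2 i).2, ← (s1 j).1, mul_assoc, ← mul_assoc g, hgf, zero_mul, mul_zero]
    · exact hEo' i j (fun h => hij (by rw [h]))
  · rw [Fintype.sum_sum_type]
    simp [hEs, hEs']

theorem idem_family (e : A) (he : e * e = e) : ∃ (E : CompleteIdemFamily A)
    (S : Finset (Fin E.n)), e = ∑ i ∈ S, E.e i := by
  classical
  have hf : (1 - e) * (1 - e) = 1 - e := by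
    rw [mul_sub, mul_one, sub_mul, one_mul, he, sub_self, sub_zero]
  obtain ⟨I, _, E, hE, hEo, hEs⟩ := idem_decomp e he
  obtain ⟨I', _, E', hE', hEo', hEs'⟩ := idem_decomp (1 - e) hf
  have sub : ∀ {J : Type} [Fintype J] (F : J → A) (h : A), (∀ i, IsPrimitiveIdempotent A (F i)) →
      (∀ i j, i ≠ j → F i * F j = 0) → ∑ i, F i = h → ∀ i, h * F i = F i ∧ F i * h = F i := by
    intro J _ F h hF hFo hFs i
    rw [← hFs, Finset.sum_mul, Finset.mul_sum]
    rw [Finset.sum_eq_single i (fun j _ hj => hFo j i hj) (by simp),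
      Finset.sum_eq_single i (fun j _ hj => hFo i j hj.symm) (by simp)]
    exact ⟨(hF i).1, (hF i).1⟩
  have s1 := sub E e hE hEo hEs
  have s2 := sub E' (1 - e) hE' hEo' hEs'
  have hef : e * (1 - e) = 0 := by rw [mul_sub, mul_one, he, sub_self]
  have hfe : (1 - e) * e = 0 := by rw [sub_mul, one_mul, he, sub_self]
  let F : I ⊕ I' → A := Sum.elim E E'
  let eq := Fintype.equivFin (I ⊕ I')
  refine ⟨{ n := Fintype.card (I ⊕ I'), e := fun i => F (eq.symm i), prim := ?_, orth := ?_,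
            total := ?_ }, Finset.univ.map
              (Function.Embedding.inl.trans eq.toEmbedding), ?_⟩
  · intro i
    rcases eq.symm i with i | i
    · exact hE i
    · exact hE' i
  · intro i j hij
    have : ∀ a b, a ≠ b → F a * F b = 0 := by
      rintro (i | i) (j | j) hij
      · exact hEo i j (fun h => hij (by rw [h]))
      · show E i * E' j = 0
        rw [← (s1 i).2, ← (s2 j).1, mul_assoc, ← mul_assoc e, hef, zero_mul, mul_zero]
      · show E' i * E j = 0
        rw [← (s2 i).2, ← (s1 j).1, mul_assoc, ← mul_assoc (1 - e), hfe, zero_mul, mul_zero]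
      · exact hEo' i j (fun h => hij (by rw [h]))
    exact this _ _ (fun h => hij (eq.symm.injective h))
  · rw [Equiv.sum_comp eq.symm F, Fintype.sum_sum_type]
    simp [F, hEs, hEs']
  · simp [F, hEs]

end AlgPart


section SimplePart
open Relation
variable {A : Type u} [Ring A]

/-- The orbit map of an element of a right module. -/
def act {M : Type u} [AddCommGroup M] [Module Aᵐᵒᵖ M] (m : M) : A →ₗ[Aᵐᵒᵖ] M where
  toFun a := MulOpposite.op a • m
  map_add' a b := by rw [MulOpposite.op_add, add_smul]
  map_smul' a b := by
    rw [MulOpposite.smul_eq_mul_unop, MulOpposite.op_mul, mul_smul, MulOpposite.op_unop]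
    rfl

section
variable {M N : Type u} [AddCommGroup M] [Module Aᵐᵒᵖ M] [AddCommGroup N] [Module Aᵐᵒᵖ N]

theorem act_def (m : M) (a : A) : MulOpposite.op a • m = act m a := rfl

theorem act_one (m : M) : act m (1 : A) = m := one_smul _ m

theorem act_mul (m : M) (a b : A) : act m (a * b) = act (act m a) b := by
  show MulOpposite.op (a * b) • m = _
  rw [MulOpposite.op_mul, mul_smul]; rfl

theorem act_map (f : M →ₗ[Aᵐᵒᵖ] N) (m : M) (a : A) : act (f m) a = f (act m a) :=
  (f.map_smul _ _).symm

theorem act_zero' (a : A) : act (0 : M) a = 0 := smul_zero _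

theorem act_add' (m n : M) (a : A) : act (m + n) a = act m a + act n a := smul_add _ _ _

theorem act_neg' (m : M) (a : A) : act (-m) a = - act m a := smul_neg _ _

theorem act_reg (x a : A) : act x a = x * a := rfl

theorem act_fix_pow {m : M} {a : A} (h : act m a = m) (n : ℕ) : act m (a ^ n) = m := by
  induction n with
  | zero => rw [pow_zero, act_one]
  | succ n ih => rw [pow_succ, act_mul, ih, h]

end

variable (A) in
/-- The Jacobson radical as a right submodule. -/
def Jr : Submodule Aᵐᵒᵖ A where
  carrier := {x | x ∈ jacobsonRad A}
  add_mem' ha hb := (jacobsonRad A).add_mem ha hb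
  zero_mem' := (jacobsonRad A).zero_mem
  smul_mem' a x hx := by
    have : (jacobsonRad A).IsTwoSided := by unfold jacobsonRad; infer_instance
    rw [MulOpposite.smul_eq_mul_unop]
    exact Ideal.mul_mem_right _ _ (show x ∈ jacobsonRad A from hx)

/-- The maximal submodule attached to a primitive idempotent. -/
def Km (e : A) : Submodule Aᵐᵒᵖ A := (Jr A).comap (Lm e)

theorem mem_Km {e x : A} : x ∈ Km e ↔ e * x ∈ jacobsonRad A := Iff.rfl

variable [IsNoetherian Aᵐᵒᵖ A] [IsArtinian Aᵐᵒᵖ A] [IsArtinianRing A]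

theorem act_jac {M : Type u} [AddCommGroup M] [Module Aᵐᵒᵖ M] {m : M} {a : A}
    (h : act m a = m) (ha : a ∈ jacobsonRad A) : m = 0 := by
  obtain ⟨n, hn⟩ := jac_nilp ha
  rw [← act_fix_pow h n, hn, map_zero]

theorem prim_not_jac {e : A} (he : IsPrimitiveIdempotent A e) : e ∉ jacobsonRad A := by
  intro h
  exact he.2.1 (act_jac (show act e e = e from he.1) h)

theorem Km_coatom {e : A} (he : IsPrimitiveIdempotent A e) : IsCoatom (Km e) := by
  have hee : e * e = e := he.1
  constructor
  · intro h
    have : (1 : A) ∈ Km e := h ▸ Submodule.mem_top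
    rw [mem_Km, mul_one] at this
    exact prim_not_jac he this
  · intro b hb
    obtain ⟨x, hxb, hx⟩ := SetLike.exists_of_lt hb
    rw [mem_Km] at hx
    obtain ⟨c, hc⟩ := prim_right_inv' he (x := e * x) (by rw [← mul_assoc, hee]) hx
    rw [eq_top_iff]
    intro z _
    have h1 : z - x * (c * z) ∈ b := by
      apply hb.le
      rw [mem_Km, mul_sub, ← mul_assoc, ← mul_assoc, hc, sub_self]
      exact zero_mem _
    have h2 : x * (c * z) ∈ b := by
      have := b.smul_mem (MulOpposite.op (c * z)) hxb
      rwa [MulOpposite.smul_eq_mul_unop] at this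
    have := b.add_mem h1 h2
    rwa [sub_add_cancel] at this

theorem simp_simple {e : A} (he : IsPrimitiveIdempotent A e) :
    IsSimpleModule Aᵐᵒᵖ (A ⧸ Km e) := isSimpleModule_iff_isCoatom.2 (Km_coatom he)

theorem simp_indec {e : A} (he : IsPrimitiveIdempotent A e) :
    (mkM (R := Aᵐᵒᵖ) (A ⧸ Km e)).IsIndec := by
  have hs : IsSimpleModule Aᵐᵒᵖ (A ⧸ Km e) := simp_simple he
  refine ⟨IsSimpleModule.nontrivial Aᵐᵒᵖ _, fun f hf => ?_⟩
  rcases LinearMap.bijective_or_eq_zero f with h | h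
  · right
    refine LinearMap.ext fun x => ?_
    exact h.1 (LinearMap.congr_fun hf _)
  · exact Or.inl h

/-- The simple module attached to a primitive idempotent. -/
def Sim (e : A) (he : IsPrimitiveIdempotent A e) : IndecModA Aᵐᵒᵖ := ⟨mkM (A ⧸ Km e), simp_indec he⟩

theorem comp_factor {e : A} (he : IsPrimitiveIdempotent A e) (M : Type u) [AddCommGroup M]
    [Module Aᵐᵒᵖ M] : (∃ m : M, act m e ≠ 0) ↔ IsCompFactorMod Aᵐᵒᵖ (A ⧸ Km e) M := by
  have hee : e * e = e := he.1
  constructor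
  · rintro ⟨m0, hm0⟩
    obtain ⟨m, hm⟩ : ∃ m, m = act m0 e := ⟨_, rfl⟩
    rw [← hm] at hm0
    have hme : act m e = m := by rw [hm, ← act_mul, hee]
    refine ⟨(Km e).map (act m), LinearMap.range (act m), LinearMap.map_le_range, ?_⟩
    let ψ : A →ₗ[Aᵐᵒᵖ] (↥(LinearMap.range (act m : A →ₗ[Aᵐᵒᵖ] M)) ⧸
        ((Km e).map (act m)).comap (LinearMap.range (act m : A →ₗ[Aᵐᵒᵖ] M)).subtype) :=
      (Submodule.mkQ _).comp (act m).rangeRestrict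
    have hψ : Function.Surjective ψ :=
      (Submodule.mkQ_surjective _).comp (LinearMap.surjective_rangeRestrict _)
    have hk : ∀ x, ψ x = 0 ↔ ∃ k, k ∈ Km e ∧ act m k = act m x := by
      intro x
      show Submodule.Quotient.mk _ = 0 ↔ _
      rw [Submodule.Quotient.mk_eq_zero]
      rfl
    have hker : LinearMap.ker ψ = Km e := by
      refine ((Km_coatom he).le_iff_eq ?_).1 ?_
      · intro h
        have h1 : (1 : A) ∈ LinearMap.ker ψ := h ▸ Submodule.mem_top
        obtain ⟨k, hk1, hk2⟩ := (hk 1).1 h1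
        rw [act_one] at hk2
        exact hm0 (act_jac (a := e * k) (by rw [act_mul, hme, hk2]) hk1)
      · intro x hx
        exact (hk x).2 ⟨x, hx, rfl⟩
    exact ⟨(ψ.quotKerEquivOfSurjective hψ).symm.trans (Submodule.quotEquivOfEq _ _ hker)⟩
  · rintro ⟨N', N, hN, ⟨φ⟩⟩
    obtain ⟨n', hn'⟩ := φ.surjective (Submodule.Quotient.mk e)
    obtain ⟨n, rfl⟩ := Submodule.mkQ_surjective _ n'
    refine ⟨n, fun h => ?_⟩
    have h1 : act n e = 0 := by
      ext; exact h
    have h2 : act (φ (Submodule.mkQ _ n)) e = 0 := by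
      have := act_map φ.toLinearMap (Submodule.mkQ _ n) e
      refine this.trans ?_
      have h5 := act_map (A := A) ((N'.comap N.subtype).mkQ) n e
      rw [h1, map_zero] at h5
      rw [h5, map_zero]
    rw [hn'] at h2
    have h3 : act ((Km e).mkQ e) e = 0 := h2
    rw [act_map, act_reg, hee] at h3
    have : e ∈ Km e := by simpa using h3
    rw [mem_Km, hee] at this
    exact prim_not_jac he this

end SimplePart


section StepPart
open Relation
variable {A : Type u} [Ring A] [IsNoetherian Aᵐᵒᵖ A] [IsArtinian Aᵐᵒᵖ A] [IsArtinianRing A]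

theorem step_lemma {e f y : A} (he : IsPrimitiveIdempotent A e) (hf : IsPrimitiveIdempotent A f)
    (hyJ : y ∈ jacobsonRad A) (hey : e * y = y) (hyf : y * f = y) (hy : y ∉ jacobsonRadSq A)
    (Y : IndecModA Aᵐᵒᵖ) (m0 : Y.1.M) (hm0 : act m0 f ≠ 0) (hYe : ∀ b : Y.1.M, act b e = 0) :
    ReflTransGen NStep (ARVertex.mk Y) (ARVertex.mk (Sim e he)) := by
  have hee : e * e = e := he.1
  have hff : f * f = f := hf.1
  obtain ⟨m, hm⟩ : ∃ m, m = act m0 f := ⟨_, rfl⟩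
  rw [← hm] at hm0
  have hmf : act m f = m := by rw [hm, ← act_mul, hff]
  let W : Submodule Aᵐᵒᵖ (Y.1.M × A) :=
    { carrier := {w | ∃ a, w.1 = act m a ∧ e * w.2 = -(y * a)}
      add_mem' := by
        rintro v w ⟨a, ha1, ha2⟩ ⟨b, hb1, hb2⟩
        exact ⟨a + b, by rw [Prod.fst_add, ha1, hb1, map_add],
          by rw [Prod.snd_add, mul_add, ha2, hb2, mul_add, neg_add]⟩
      zero_mem' := ⟨0, by simp, by simp⟩
      smul_mem' := by
        rintro c w ⟨a, ha1, ha2⟩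
        refine ⟨a * c.unop, ?_, ?_⟩
        · rw [Prod.smul_fst, ha1, act_mul]; rfl
        · rw [Prod.smul_snd, MulOpposite.smul_eq_mul_unop, ← mul_assoc, ha2, neg_mul, mul_assoc] }
  have hW : ∀ w, w ∈ W ↔ ∃ a, w.1 = act m a ∧ e * w.2 = -(y * a) := fun w => Iff.rfl
  let Mq := (Y.1.M × A) ⧸ W
  let br : Y.1.M × A →ₗ[Aᵐᵒᵖ] Mq := W.mkQ
  have hbr : Function.Surjective br := W.mkQ_surjective
  have hbr0 : ∀ w, br w = 0 ↔ w ∈ W := fun w => Submodule.Quotient.mk_eq_zero W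
  obtain ⟨p, hp⟩ := desc br hbr ((Km e).mkQ.comp (LinearMap.snd Aᵐᵒᵖ Y.1.M A)) (by
    intro w hw
    obtain ⟨a, -, ha⟩ := (hbr0 w).1 hw
    show Submodule.Quotient.mk w.2 = 0
    rw [Submodule.Quotient.mk_eq_zero, mem_Km, ha]
    exact neg_mem (jac_mul_right hyJ a))
  have hp' : ∀ b x, p (br (b, x)) = (Km e).mkQ x := fun b x => hp (b, x)
  have hKm : ∀ x, (Km e).mkQ x = 0 ↔ e * x ∈ jacobsonRad A :=
    fun x => Submodule.Quotient.mk_eq_zero (Km e)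
  obtain ⟨I, _, D, hD⟩ := hasDecomp (R := Aᵐᵒᵖ) Mq
  let v0 : Mq := br (0, e)
  have hpv0 : p v0 ≠ 0 := by
    rw [hp', Ne, hKm, hee]
    exact prim_not_jac he
  have hbract : ∀ b x a, act (br (b, x)) a = br (act b a, x * a) := by
    intro b x a
    rw [act_map]; rfl
  have hbe : ∀ x, br (0, x) = br (0, e * x) := by
    intro x
    rw [← sub_eq_zero, ← map_sub, hbr0, hW]
    refine ⟨0, by simp, ?_⟩
    simp [mul_sub, ← mul_assoc, hee]
  have hv0a : ∀ a, act v0 a = br (0, e * a) := by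
    intro a
    rw [hbract, act_zero']
  obtain ⟨l, hl⟩ : ∃ l, p ((D l).i ((D l).p v0)) ≠ 0 := by
    by_contra hcon
    push Not at hcon
    apply hpv0
    rw [← hD v0, map_sum]
    exact Finset.sum_eq_zero (fun l _ => hcon l)
  let U : IndecModA Aᵐᵒᵖ := ⟨(D l).W, (D l).indec⟩
  have r2 : ReflTransGen NStep (ARVertex.mk U) (ARVertex.mk (Sim e he)) := by
    refine nreach (X := U) (Y := Sim e he) (p.comp (D l).i) (fun h => hl ?_)
    exact LinearMap.congr_fun h ((D l).p v0)
  refine ReflTransGen.trans (nreach (X := Y) (Y := U)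
    (((D l).p.comp br).comp (LinearMap.inl Aᵐᵒᵖ Y.1.M A)) (fun h0 => ?_)) r2
  let ε : Mq →ₗ[Aᵐᵒᵖ] Mq := (D l).i.comp (D l).p
  have hεε : ∀ x, ε (ε x) = ε x := fun x => congrArg (D l).i ((D l).split _)
  have hεb : ∀ b, ε (br (b, 0)) = 0 := by
    intro b
    have : (D l).p (br (b, 0)) = 0 := LinearMap.congr_fun h0 b
    show (D l).i ((D l).p (br (b, 0))) = 0
    rw [this, map_zero]
  obtain ⟨⟨b, c⟩, hbc⟩ := hbr (ε v0)
  have hv0e : act v0 e = v0 := by rw [hv0a, hee]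
  have h1 : ε v0 = br (0, e * (c * e)) := by
    have h2 : ε v0 = act (ε v0) e := by rw [act_map, hv0e]
    rw [h2, ← hbc, hbract, hYe, ← hbe]
  have h3 : ε v0 = act v0 (c * e) := by rw [h1, hv0a]
  have h4 : e * (c * e) ∉ jacobsonRad A := by
    intro h4
    apply hl
    show p (ε v0) = 0
    rw [h1, hp', hKm, ← mul_assoc, hee]
    exact h4
  obtain ⟨d, hd⟩ := prim_right_inv' he (x := e * (c * e)) (by rw [← mul_assoc, hee]) h4
  have h5 : v0 = act (ε v0) d := by
    rw [h1, hbract, hd, act_zero']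
  have h6 : ε v0 = v0 := by
    rw [h5, ← act_map, hεε]
  have h7 : br (m, 0) = act v0 y := by
    rw [hv0a, hey, ← sub_eq_zero, ← map_sub, hbr0, hW]
    exact ⟨1, by simp [act_one], by simp [hey]⟩
  have h8 : br (m, 0) = 0 := by
    have : ε (br (m, 0)) = br (m, 0) := by
      rw [h7, ← act_map, h6]
    rw [← this, hεb]
  rw [hbr0, hW] at h8
  obtain ⟨a, ha1, ha2⟩ := h8
  simp only [mul_zero] at ha1 ha2
  have hya : y * a = 0 := by rw [← neg_eq_zero, ← ha2]
  by_cases hJ : f * a * f ∈ jacobsonRad A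
  · exact hm0 (act_jac (a := f * a * f) (by rw [act_mul, act_mul, hmf, ← ha1, hmf]) hJ)
  · obtain ⟨c, hc⟩ := prim_right_inv' hf (x := f * a * f)
      (by rw [← mul_assoc, ← mul_assoc, hff]) hJ
    apply hy
    have : y = 0 := by
      rw [← hyf, ← hc, ← mul_assoc, ← mul_assoc, ← mul_assoc, hyf, hya, zero_mul, zero_mul]
    rw [this]
    exact zero_mem _

theorem jsq_mul_right {x : A} (h : x ∈ jacobsonRadSq A) (c : A) : x * c ∈ jacobsonRadSq A := by
  unfold jacobsonRadSq at h
  induction h using Submodule.span_induction with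
  | mem x hx =>
    obtain ⟨a, ha, b, hb, rfl⟩ := hx
    exact Ideal.subset_span ⟨a, ha, b * c, jac_mul_right hb c, mul_assoc _ _ _⟩
  | zero => rw [zero_mul]; exact zero_mem _
  | add x y _ _ h1 h2 => rw [add_mul]; exact add_mem h1 h2
  | smul a x _ h1 => rw [smul_eq_mul, mul_assoc]; exact Ideal.mul_mem_left _ a h1

theorem jsq_le {x : A} (h : x ∈ jacobsonRadSq A) : x ∈ jacobsonRad A := by
  unfold jacobsonRadSq at h
  refine (Ideal.span_le.2 ?_) h
  rintro x ⟨a, ha, b, hb, rfl⟩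
  exact jac_mul_left hb a

theorem dual_lemma {e f y : A} (he : IsPrimitiveIdempotent A e) (hf : IsPrimitiveIdempotent A f)
    (hey : e * y = y) (hyf : y * f = y) (hy : y ∉ jacobsonRadSq A)
    (X : IndecModA Aᵐᵒᵖ) (m0 : X.1.M) (hm0 : act m0 e ≠ 0) (hXf : ∀ b : X.1.M, act b f = 0) :
    ReflTransGen NStep (ARVertex.mk (Sim f hf)) (ARVertex.mk X) := by
  have hee : e * e = e := he.1
  obtain ⟨m, hm⟩ : ∃ m, m = act m0 e := ⟨_, rfl⟩
  rw [← hm] at hm0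
  have hme : act m e = m := by rw [hm, ← act_mul, hee]
  let T : Set A := {x | ∃ k j, e * k = k ∧ act m k = 0 ∧ j ∈ jacobsonRad A ∧ x = k * j}
  let KJ : Submodule Aᵐᵒᵖ A := Submodule.span Aᵐᵒᵖ T
  have hKJ : ∀ x ∈ KJ, x ∈ jacobsonRadSq A := by
    intro x hx
    induction hx using Submodule.span_induction with
    | mem x hx =>
      obtain ⟨k, j, hk1, hk2, hj, rfl⟩ := hx
      refine Ideal.subset_span ⟨k, ?_, j, hj, rfl⟩
      by_contra hkJ
      obtain ⟨c, hc⟩ := prim_right_inv' he hk1 hkJ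
      apply hm0
      rw [← hme, ← hc, act_mul, hk2, act_zero']
    | zero => exact zero_mem _
    | add x y _ _ h1 h2 => exact add_mem h1 h2
    | smul a x _ h1 =>
      rw [MulOpposite.smul_eq_mul_unop]
      exact jsq_mul_right h1 _
  have hKJm : ∀ x ∈ KJ, act m x = 0 := by
    intro x hx
    have : KJ ≤ LinearMap.ker (act m) := by
      refine Submodule.span_le.2 ?_
      rintro x ⟨k, j, hk1, hk2, hj, rfl⟩
      show act m (k * j) = 0
      rw [act_mul, hk2, act_zero']
    exact this hx
  let L : Submodule Aᵐᵒᵖ A := KJ.comap (Lm e)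
  have hL : ∀ x, x ∈ L ↔ e * x ∈ KJ := fun x => Iff.rfl
  let q : A →ₗ[Aᵐᵒᵖ] A ⧸ L := L.mkQ
  have hq : Function.Surjective q := L.mkQ_surjective
  have hq0 : ∀ x, q x = 0 ↔ e * x ∈ KJ := fun x => Submodule.Quotient.mk_eq_zero L
  have hqe : ∀ x, q (e * x) = q x := by
    intro x
    rw [← sub_eq_zero, ← map_sub, hq0, mul_sub, ← mul_assoc, hee, sub_self]
    exact zero_mem _
  have hG : (mkM (R := Aᵐᵒᵖ) (A ⧸ L)).IsIndec := by
    refine ⟨⟨⟨q 1, 0, ?_⟩⟩, ?_⟩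
    · rw [Ne, hq0, mul_one]
      exact fun h => prim_not_jac he (jsq_le (hKJ e h))
    · intro (θ : Module.End Aᵐᵒᵖ (A ⧸ L)) hθ
      have hθθ : ∀ x, θ (θ x) = θ x := fun x => LinearMap.congr_fun hθ x
      obtain ⟨x, hx⟩ := hq (θ (q 1))
      have h1 : θ (q 1) = q (e * (x * e)) := by
        rw [hqe]
        have : q (x * e) = act (q x) e := (act_map q x e).symm
        rw [this, hx, act_map, act_map, act_reg, one_mul, ← mul_one e, hqe]
      have h2 : ∀ z, θ (q z) = q (e * (x * e) * z) := by
        intro z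
        have h3 : q z = act (q 1) z := by rw [act_map, act_reg, one_mul]
        rw [h3, ← act_map, h1, act_map, act_reg]
      by_cases hJ : e * (x * e) ∈ jacobsonRad A
      · left
        obtain ⟨n, hn⟩ := jac_nilp hJ
        have h4 : ∀ n z, θ (q z) = q ((e * (x * e)) ^ (n + 1) * z) := by
          intro n
          induction n with
          | zero => intro z; rw [h2, zero_add, pow_one]
          | succ n ih =>
            intro z
            rw [← hθθ, ih, h2, ← mul_assoc, ← pow_succ']
        refine LinearMap.ext fun w => ?_
        obtain ⟨z, rfl⟩ := hq w
        rw [h4 n, pow_succ, hn, zero_mul, zero_mul, map_zero]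
        rfl
      · right
        obtain ⟨c, hc⟩ := prim_right_inv' he (x := e * (x * e)) (by rw [← mul_assoc, hee]) hJ
        refine LinearMap.ext fun w => ?_
        obtain ⟨z, rfl⟩ := hq w
        have h5 : θ (q (c * z)) = q z := by
          rw [h2, ← mul_assoc, hc, hqe]
        rw [← h5, hθθ]
        rfl
  let G : IndecModA Aᵐᵒᵖ := ⟨mkM (A ⧸ L), hG⟩
  obtain ⟨φ, hφ⟩ := desc (Km f).mkQ (Km f).mkQ_surjective (q.comp (Lm y)) (by
    intro a ha
    have ha' : f * a ∈ jacobsonRad A := (Submodule.Quotient.mk_eq_zero (Km f)).1 ha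
    show q (y * a) = 0
    rw [hq0, ← mul_assoc, hey]
    refine Submodule.subset_span ⟨y, f * a, hey, ?_, ha', by rw [← mul_assoc, hyf]⟩
    rw [← hyf, act_mul, hXf])
  obtain ⟨ψ, hψ⟩ := desc q hq (act m) (by
    intro x hx
    rw [hq0] at hx
    have := hKJm _ hx
    rwa [act_mul, hme] at this)
  refine ReflTransGen.trans (nreach (X := Sim f hf) (Y := G) φ ?_) (nreach (X := G) (Y := X) ψ ?_)
  · intro h
    apply hy
    have h1 : φ ((Km f).mkQ 1) = 0 := LinearMap.congr_fun h _
    rw [hφ] at h1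
    have h2 : q (y * 1) = 0 := h1
    rw [mul_one, hq0, hey] at h2
    exact hKJ y h2
  · intro h
    apply hm0
    have h1 : ψ (q 1) = 0 := LinearMap.congr_fun h _
    rwa [hψ, act_one] at h1

theorem sim_step (hb : IsBasicAlgebra A) {e f y : A} (he : IsPrimitiveIdempotent A e)
    (hf : IsPrimitiveIdempotent A f) (hef : e * f = 0) (hfe : f * e = 0)
    (hey : e * y = y) (hyf : y * f = y) (hy : y ∉ jacobsonRadSq A) :
    ReflTransGen NStep (ARVertex.mk (Sim f hf)) (ARVertex.mk (Sim e he)) := by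
  have hee : e * e = e := he.1
  have hKm : ∀ x, (Km e).mkQ x = 0 ↔ e * x ∈ jacobsonRad A :=
    fun x => Submodule.Quotient.mk_eq_zero (Km e)
  refine dual_lemma he hf hey hyf hy (Sim e he) ((Km e).mkQ 1) ?_ ?_
  · intro h
    have h1 : act ((Km e).mkQ 1) e = 0 := h
    rw [act_map, act_reg, one_mul, hKm, hee] at h1
    exact prim_not_jac he h1
  · intro b
    obtain ⟨x, rfl⟩ := (Km e).mkQ_surjective b
    show act ((Km e).mkQ x) f = 0
    rw [act_map, act_reg, hKm, ← mul_assoc]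
    exact basic_jac hb he hf hef hfe x

end StepPart


section FinalPart
open Relation
variable {A : Type u} [Ring A] [IsNoetherian Aᵐᵒᵖ A] [IsArtinian Aᵐᵒᵖ A] [IsArtinianRing A]

theorem vanish_aux (hb : IsBasicAlgebra A) (E : CompleteIdemFamily A) (n : ℕ) :
    ∀ i k, ¬ ReflTransGen (QAarrow A E) i k → ∀ a, E.e i * a * E.e k ∈ (jacobsonRad A) ^ n := by
  induction n with
  | zero => intro i k _ a; rw [Submodule.pow_zero, Ideal.one_eq_top]; exact Submodule.mem_top
  | succ n ih =>
    intro i k hik a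
    have hii : E.e i * E.e i = E.e i := (E.prim i).1
    have hkk : E.e k * E.e k = E.e k := (E.prim k).1
    have hne : i ≠ k := by
      rintro rfl
      exact hik .refl
    have hJ : E.e i * a * E.e k ∈ jacobsonRad A :=
      basic_jac hb (E.prim i) (E.prim k) (E.orth _ _ hne) (E.orth _ _ hne.symm) a
    have hsq : E.e i * a * E.e k ∈ jacobsonRadSq A := by
      by_contra hcon
      apply hik
      refine ReflTransGen.single ⟨E.e i * a * E.e k, hJ, ?_⟩
      rwa [← mul_assoc, ← mul_assoc, hii, mul_assoc, hkk]
    have key : ∀ z, z ∈ jacobsonRadSq A → ∀ c, E.e i * (c * z) * E.e k ∈ (jacobsonRad A) ^ (n + 1) := by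
      intro z hz
      unfold jacobsonRadSq at hz
      induction hz using Submodule.span_induction with
      | mem x hx =>
        obtain ⟨p, hp, q, hq, rfl⟩ := hx
        intro c
        have : E.e i * (c * (p * q)) * E.e k =
            ∑ j, (E.e i * (c * p) * E.e j) * (E.e j * q * E.e k) := by
          have h1 : ∀ j, (E.e i * (c * p) * E.e j) * (E.e j * q * E.e k) =
              E.e i * (c * p) * E.e j * (q * E.e k) := by
            intro j
            have hjj : E.e j * E.e j = E.e j := (E.prim j).1
            rw [mul_assoc (E.e j), ← mul_assoc _ (E.e j), mul_assoc _ (E.e j) (E.e j), hjj]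
          simp only [h1]
          rw [← Finset.sum_mul, ← Finset.mul_sum, E.total, mul_one]
          simp only [mul_assoc]
        rw [this]
        refine sum_mem fun j _ => ?_
        by_cases hij : ReflTransGen (QAarrow A E) i j
        · have hjk : ¬ ReflTransGen (QAarrow A E) j k := fun h => hik (hij.trans h)
          have : (jacobsonRad A).IsTwoSided := by unfold jacobsonRad; infer_instance
          rw [Ideal.IsTwoSided.pow_succ]
          refine Ideal.mul_mem_mul ?_ (ih j k hjk q)
          exact jac_mul_right (jac_mul_left (jac_mul_left hp _) _) _
        · rw [Submodule.pow_succ]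
          refine Ideal.mul_mem_mul (ih i j hij _) ?_
          exact jac_mul_right (jac_mul_left hq _) _
      | zero => intro c; simp
      | add x y _ _ h1 h2 =>
        intro c
        rw [mul_add, mul_add, add_mul]
        exact add_mem (h1 c) (h2 c)
      | smul a x _ h1 =>
        intro c
        have := h1 (c * a)
        rwa [mul_assoc c a x] at this
    have := key _ hsq 1
    rwa [one_mul, ← mul_assoc, ← mul_assoc, hii, mul_assoc, hkk] at this

theorem vanish (hb : IsBasicAlgebra A) (E : CompleteIdemFamily A) {i k : Fin E.n}
    (h : ¬ ReflTransGen (QAarrow A E) i k) (a : A) : E.e i * a * E.e k = 0 := by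
  obtain ⟨n, hn⟩ := IsArtinianRing.isNilpotent_jacobson_bot (R := A)
  have := vanish_aux hb E n i k h a
  unfold jacobsonRad at this
  rw [hn] at this
  exact this

theorem corner_vanish (hb : IsBasicAlgebra A) (E : CompleteIdemFamily A) (S : Finset (Fin E.n))
    (hS : ∀ a b k, a ∈ S → b ∈ S → ReflTransGen (QAarrow A E) a k →
      ReflTransGen (QAarrow A E) k b → k ∈ S) (e : A) (he : e = ∑ i ∈ S, E.e i) (a b : A) :
    e * a * (1 - e) * b * e = 0 := by
  classical
  have hf : 1 - e = ∑ k ∈ Sᶜ, E.e k := by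
    rw [he, ← E.total, ← Finset.sum_add_sum_compl S, add_sub_cancel_left]
  rw [hf]
  nth_rewrite 1 [he]
  rw [Finset.sum_mul, Finset.sum_mul, Finset.sum_mul, Finset.sum_mul]
  refine Finset.sum_eq_zero fun i hi => ?_
  rw [Finset.mul_sum, Finset.sum_mul, Finset.sum_mul]
  refine Finset.sum_eq_zero fun k hk => ?_
  rw [he, Finset.mul_sum]
  refine Finset.sum_eq_zero fun j hj => ?_
  have hkk : E.e k * E.e k = E.e k := (E.prim k).1
  by_cases h1 : ReflTransGen (QAarrow A E) i k
  · have h2 : ¬ ReflTransGen (QAarrow A E) k j := fun h2 =>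
      (Finset.mem_compl.1 hk) (hS i j k hi hj h1 h2)
    have := vanish hb E h2 b
    rw [mul_assoc, mul_assoc, ← mul_assoc (E.e k), this, mul_zero]
  · rw [vanish hb E h1 a, zero_mul, zero_mul]

theorem arrow_elem {E : CompleteIdemFamily A} {i j : Fin E.n} (h : QAarrow A E i j) :
    ∃ y, y ∈ jacobsonRad A ∧ E.e i * y = y ∧ y * E.e j = y ∧ y ∉ jacobsonRadSq A := by
  obtain ⟨y, hy, h⟩ := h
  have hii : E.e i * E.e i = E.e i := (E.prim i).1
  have hjj : E.e j * E.e j = E.e j := (E.prim j).1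
  exact ⟨_, jac_mul_right (jac_mul_left hy _) _, by rw [← mul_assoc, ← mul_assoc, hii],
    by rw [mul_assoc, hjj], h⟩

theorem arrow_sim (hb : IsBasicAlgebra A) {E : CompleteIdemFamily A} {i j : Fin E.n}
    (h : QAarrow A E i j) : ReflTransGen NStep (ARVertex.mk (Sim (E.e j) (E.prim j)))
      (ARVertex.mk (Sim (E.e i) (E.prim i))) := by
  by_cases hij : i = j
  · subst hij; exact .refl
  · obtain ⟨y, -, h1, h2, h3⟩ := arrow_elem h
    exact sim_step hb _ _ (E.orth _ _ hij) (E.orth _ _ (Ne.symm hij)) h1 h2 h3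

theorem sim_act {e : A} (he : IsPrimitiveIdempotent A e) :
    ∃ m : (Sim e he).1.M, act m e ≠ 0 := by
  have hee : e * e = e := he.1
  refine ⟨(Km e).mkQ 1, fun h => ?_⟩
  have h1 : act ((Km e).mkQ 1) e = 0 := h
  rw [act_map, act_reg, one_mul] at h1
  have h2 : e * e ∈ jacobsonRad A := (Submodule.Quotient.mk_eq_zero (Km e)).1 h1
  rw [hee] at h2
  exact prim_not_jac he h2

theorem convex_rtg (hb : IsBasicAlgebra A) (E : CompleteIdemFamily A) (S : Finset (Fin E.n))
    {Γ : Set (ARVertex Aᵐᵒᵖ)} (hΓ : IsCycleFiniteCyclicComponent Γ)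
    (hS : ∀ i, i ∈ S ↔ ∃ x ∈ Γ, ∃ X : IndecModA Aᵐᵒᵖ, ARVertex.mk X = x ∧
      ∃ m : X.1.M, act m (E.e i) ≠ 0) (a b k : Fin E.n) (ha : a ∈ S) (hb' : b ∈ S)
    (h1 : ReflTransGen (QAarrow A E) a k) (h2 : ReflTransGen (QAarrow A E) k b) : k ∈ S := by
  by_contra hk
  have L1 : ∃ y ∈ Γ, ReflTransGen NStep y (ARVertex.mk (Sim (E.e k) (E.prim k))) := by
    clear h1
    induction h2 using ReflTransGen.head_induction_on with
    | refl => exact (hk hb').elim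
    | head hkc hcb ih =>
      rename_i k c
      by_cases hc : c ∈ S
      · obtain ⟨y, hy, Y, rfl, m, hm⟩ := (hS c).1 hc
        obtain ⟨z, z0, z1, z2, z3⟩ := arrow_elem hkc
        refine ⟨_, hy, step_lemma (E.prim k) (E.prim c) z0 z1 z2 z3 Y m hm fun b => ?_⟩
        by_contra hcon
        exact hk ((hS k).2 ⟨_, hy, Y, rfl, b, hcon⟩)
      · obtain ⟨y, hy, hr⟩ := ih hc
        exact ⟨y, hy, hr.trans (arrow_sim hb hkc)⟩
  have L2 : ∃ y ∈ Γ, ReflTransGen NStep (ARVertex.mk (Sim (E.e k) (E.prim k))) y := by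
    clear h2 L1
    induction h1 with
    | refl => exact (hk ha).elim
    | tail hac hck ih =>
      rename_i c k
      by_cases hc : c ∈ S
      · obtain ⟨y, hy, Y, rfl, m, hm⟩ := (hS c).1 hc
        obtain ⟨z, z0, z1, z2, z3⟩ := arrow_elem hck
        refine ⟨_, hy, dual_lemma (E.prim c) (E.prim k) z1 z2 z3 Y m hm fun b => ?_⟩
        by_contra hcon
        exact hk ((hS k).2 ⟨_, hy, Y, rfl, b, hcon⟩)
      · obtain ⟨y, hy, hr⟩ := ih hc
        exact ⟨y, hy, (arrow_sim hb hck).trans hr⟩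
  obtain ⟨x, hx, hx'⟩ := L1
  obtain ⟨y, hy, hy'⟩ := L2
  exact hk ((hS k).2 ⟨_, comp_convex hΓ hx hy hx' hy', _, rfl, sim_act (E.prim k)⟩)

/-- The idempotent of a direct sum decomposition of the regular module. -/
theorem compl_idem {P Q : Submodule Aᵐᵒᵖ A} (h : IsCompl P Q) : ∃ e : A, e * e = e ∧
    (∀ x, x ∈ P ↔ e * x = x) ∧ (∀ x, x ∈ Q ↔ (1 - e) * x = x) := by
  have hPm : ∀ (P : Submodule Aᵐᵒᵖ A) (x a : A), x ∈ P → x * a ∈ P := by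
    intro P x a hx
    have := P.smul_mem (MulOpposite.op a) hx
    rwa [MulOpposite.smul_eq_mul_unop] at this
  obtain ⟨p, hp, q, hq, hpq⟩ : ∃ p ∈ P, ∃ q ∈ Q, p + q = 1 :=
    Submodule.mem_sup.1 (h.sup_eq_top ▸ Submodule.mem_top)
  have hdis : ∀ x, x ∈ P → x ∈ Q → x = 0 := fun x h1 h2 => by
    have : x ∈ P ⊓ Q := ⟨h1, h2⟩
    rwa [h.inf_eq_bot, Submodule.mem_bot] at this
  have hq' : 1 - p = q := by rw [← hpq, add_sub_cancel_left]
  have h1 : ∀ x ∈ P, p * x = x := by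
    intro x hx
    have h3 : q * x = x - p * x := by rw [← hq', sub_mul, one_mul]
    have := hdis (q * x) (h3 ▸ P.sub_mem hx (hPm _ _ _ hp)) (hPm _ _ _ hq)
    rw [this] at h3
    exact (sub_eq_zero.1 h3.symm).symm
  have h2 : ∀ x ∈ Q, q * x = x := by
    intro x hx
    have h3 : p * x = x - q * x := by rw [← hq', sub_mul, one_mul, sub_sub_cancel]
    have := hdis (p * x) (hPm _ _ _ hp) (h3 ▸ Q.sub_mem hx (hPm _ _ _ hq))
    rw [this] at h3
    exact (sub_eq_zero.1 h3.symm).symm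
  refine ⟨p, h1 p hp, fun x => ⟨h1 x, fun h => h ▸ hPm _ _ _ hp⟩, ?_⟩
  rw [hq']
  exact fun x => ⟨h2 x, fun h => h ▸ hPm _ _ _ hq⟩

theorem top_iff (hb : IsBasicAlgebra A) (E : CompleteIdemFamily A) (S : Finset (Fin E.n))
    (e : A) (he : e = ∑ i ∈ S, E.e i) (P : Submodule Aᵐᵒᵖ A) (hP : ∀ x, x ∈ P ↔ e * x = x)
    (i : Fin E.n) : i ∈ S ↔ ∃ v : (↥P ⧸ modRadical Aᵐᵒᵖ ↥P), act v (E.e i) ≠ 0 := by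
  classical
  have hii : E.e i * E.e i = E.e i := (E.prim i).1
  constructor
  · intro hi
    have hei : E.e i ∈ P := by
      rw [hP, he, Finset.sum_mul, Finset.sum_eq_single i (fun j _ hj => E.orth _ _ hj)
        (fun h => (h hi).elim), hii]
    refine ⟨(modRadical Aᵐᵒᵖ ↥P).mkQ ⟨E.e i, hei⟩, fun h => ?_⟩
    rw [act_map] at h
    have h1 : act (⟨E.e i, hei⟩ : P) (E.e i) = ⟨E.e i, hei⟩ := Subtype.ext hii
    rw [h1] at h
    have h2 : (⟨E.e i, hei⟩ : P) ∈ Module.jacobson Aᵐᵒᵖ ↥P :=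
      (Submodule.Quotient.mk_eq_zero _).1 h
    have h3 : E.e i ∈ Module.jacobson Aᵐᵒᵖ A := Module.le_comap_jacobson P.subtype h2
    have h4 : E.e i ∈ Km (E.e i) := (Submodule.mem_sInf.1 h3) _ (Km_coatom (E.prim i))
    rw [mem_Km, hii] at h4
    exact prim_not_jac (E.prim i) h4
  · rintro ⟨v, hv⟩
    by_contra hi
    apply hv
    obtain ⟨⟨x, hx⟩, rfl⟩ := (modRadical Aᵐᵒᵖ ↥P).mkQ_surjective v
    rw [act_map]
    refine (Submodule.Quotient.mk_eq_zero _).2 ?_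
    obtain ⟨z, hz⟩ : ∃ z : P, z = act (⟨x, hx⟩ : P) (E.e i) := ⟨_, rfl⟩
    rw [← hz]
    have hzJ : (z : A) ∈ jacobsonRad A := by
      have : (z : A) = x * E.e i := by rw [hz]; rfl
      rw [this, ← (hP x).1 hx, he, Finset.sum_mul, Finset.sum_mul]
      refine sum_mem fun j hj => ?_
      have hij : j ≠ i := fun h => hi (h ▸ hj)
      exact basic_jac hb (E.prim j) (E.prim i) (E.orth _ _ hij) (E.orth _ _ hij.symm) x
    have hee : e ∈ P := by
      have h1 : e * 1 = ∑ i ∈ S, E.e i := by rw [mul_one, he]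
      rw [hP]
      nth_rewrite 2 [he]
      rw [Finset.mul_sum]
      nth_rewrite 2 [he]
      refine Finset.sum_congr rfl fun j hj => ?_
      rw [he, Finset.sum_mul, Finset.sum_eq_single j (fun k _ hk => E.orth _ _ hk)
        (fun h => (h hj).elim)]
      exact (E.prim j).1
    refine Submodule.mem_sInf.2 fun N (hN : IsCoatom N) => ?_
    by_contra hzN
    have hsup : N ⊔ Submodule.span Aᵐᵒᵖ {z} = ⊤ := by
      refine hN.2 _ (lt_of_le_of_ne le_sup_left fun h => hzN ?_)
      rw [h]
      exact Submodule.mem_sup_right (Submodule.mem_span_singleton_self z)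
    obtain ⟨n, hn, w, hw, hnw⟩ : ∃ n ∈ N, ∃ w ∈ Submodule.span Aᵐᵒᵖ {z}, n + w = ⟨e, hee⟩ :=
      Submodule.mem_sup.1 (hsup ▸ Submodule.mem_top)
    obtain ⟨a, rfl⟩ := Submodule.mem_span_singleton.1 hw
    have h5 : (n : A) + z * a.unop = e := congrArg Subtype.val hnw
    obtain ⟨r, hr⟩ := jac_nilp (jac_mul_right hzJ a.unop)
    have hu : IsUnit (1 - (z : A) * a.unop) := IsNilpotent.isUnit_one_sub ⟨r, hr⟩
    obtain ⟨u, hu⟩ := hu.exists_right_inv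
    have h6 : (n : A) * u = e := by
      have hez : e * (z : A) = z := (hP _).1 z.2
      have : (n : A) = e * (1 - (z : A) * a.unop) := by
        rw [mul_sub, mul_one, ← mul_assoc, hez, ← h5, add_sub_cancel_right]
      rw [this, mul_assoc, hu, mul_one]
    apply hN.1
    rw [eq_top_iff]
    intro t _
    have h7 : t = act n (u * t) := by
      apply Subtype.ext
      show (t : A) = n * (u * t)
      rw [← mul_assoc, h6, (hP _).1 t.2]
    rw [h7]
    exact N.smul_mem _ hn

theorem trace_equiv (e : A) (he : e * e = e) (Q : Submodule Aᵐᵒᵖ A)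
    (hQ : ∀ x, x ∈ Q ↔ (1 - e) * x = x) (hv : ∀ a b, e * a * (1 - e) * b * e = 0) :
    Nonempty ((traceIdeal A Q).ringCon.Quotient ≃+* cornerRing A e) := by
  have hff : (1 - e) * (1 - e) = 1 - e := by
    rw [mul_sub, mul_one, sub_mul, one_mul, he, sub_self, sub_zero]
  have hfQ : 1 - e ∈ Q := (hQ _).2 hff
  have hmem : ∀ x, x ∈ traceIdeal A Q → e * x * e = 0 := by
    let T : TwoSidedIdeal A := TwoSidedIdeal.mk' {x | ∀ a b, e * a * x * b * e = 0}
      (by intro a b; simp)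
      (by intro x y hx hy a b; rw [mul_add, add_mul, add_mul, hx, hy, add_zero])
      (by intro x hx a b; rw [mul_neg, neg_mul, neg_mul, hx, neg_zero])
      (by intro x y hy a b; rw [← mul_assoc, mul_assoc e a x]; exact hy _ _)
      (by intro x y hx a b; rw [← mul_assoc, mul_assoc _ y b]; exact hx _ _)
    have hT : ∀ x, x ∈ T ↔ ∀ a b, e * a * x * b * e = 0 := fun x => by
      simp [T, TwoSidedIdeal.mem_mk']
    have hle : traceIdeal A Q ≤ T := by
      unfold traceIdeal
      rw [TwoSidedIdeal.span_le]
      intro x hx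
      obtain ⟨φ, hφ⟩ := Set.mem_iUnion.1 hx
      obtain ⟨q, rfl⟩ := hφ
      have h1 : q = act (⟨1 - e, hfQ⟩ : Q) (q : A) := Subtype.ext ((hQ _).1 q.2).symm
      have h2 : φ q = φ ⟨1 - e, hfQ⟩ * ((1 - e) * q) := by
        conv_lhs => rw [h1]
        rw [← act_map, act_reg, (hQ _).1 q.2]
      show φ q ∈ T
      rw [hT]
      intro a b
      rw [h2]
      have := hv (a * φ ⟨1 - e, hfQ⟩) (q * b)
      simpa only [mul_assoc] using this
    intro x hx
    have := (hT x).1 (hle hx) 1 1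
    rwa [mul_one, mul_one] at this
  have hfI : 1 - e ∈ traceIdeal A Q :=
    TwoSidedIdeal.subset_span (Set.mem_iUnion.2 ⟨Q.subtype, ⟨1 - e, hfQ⟩, rfl⟩)
  have hrel : ∀ x y : A, (RingCon.mk' (traceIdeal A Q).ringCon x =
      RingCon.mk' (traceIdeal A Q).ringCon y) ↔ x - y ∈ traceIdeal A Q := by
    intro x y
    rw [← TwoSidedIdeal.rel_iff]
    exact RingCon.eq _
  let F : cornerRing A e →ₙ+* (traceIdeal A Q).ringCon.Quotient :=
    ((RingCon.mk' (traceIdeal A Q).ringCon : A →+* _) : A →ₙ+* _).comp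
      (NonUnitalSubringClass.subtype (cornerRing A e))
  have hF : ∀ x : cornerRing A e, F x = RingCon.mk' (traceIdeal A Q).ringCon (x : A) :=
    fun _ => rfl
  refine ⟨(RingEquiv.ofBijective F ⟨?_, ?_⟩).symm⟩
  · intro x y hxy
    rw [hF, hF, hrel] at hxy
    have := hmem _ hxy
    rw [mul_sub, sub_mul, x.2.1, x.2.2, y.2.1, y.2.2] at this
    exact Subtype.ext (sub_eq_zero.1 this)
  · intro z
    obtain ⟨a, rfl⟩ := RingCon.mk'_surjective _ z
    refine ⟨⟨e * a * e, by rw [← mul_assoc, ← mul_assoc, he], by rw [mul_assoc, he]⟩, ?_⟩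
    rw [hF, hrel]
    have : e * a * e - a = -((1 - e) * a) + -(e * a * (1 - e)) := by noncomm_ring
    show e * a * e - a ∈ _
    rw [this]
    exact (traceIdeal A Q).add_mem ((traceIdeal A Q).neg_mem
      ((traceIdeal A Q).mul_mem_right _ _ hfI)) ((traceIdeal A Q).neg_mem
      ((traceIdeal A Q).mul_mem_left _ _ hfI))

end FinalPart

/-- **Corollary 3.** Let `A` be a basic indecomposable artin algebra and `Γ` a cycle-finite
component of the cyclic quiver `_cΓ_A`. Then there exists a convex idempotent `e_Γ` of `A`
such that the support algebra `supp(Γ) = A / t_A(Γ)` is isomorphic to the corner algebra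
`e_Γ A e_Γ`. -/
theorem support_algebra_iso_corner
    (K A : Type u) [CommRing K] [IsArtinianRing K] [Ring A] [Algebra K A]
    [Module.Finite K A] (hbasic : IsBasicAlgebra A) (hconn : IsConnectedAlgebra A)
    (Γ : Set (ARVertex Aᵐᵒᵖ)) (hΓ : IsCycleFiniteCyclicComponent Γ) :
    ∀ D : GammaDecomp A Γ, ∃ e : A, IsConvexIdempotent A e ∧
      Nonempty ((traceIdeal A D.Q).ringCon.Quotient ≃+* cornerRing A e) := by
  intro D
  haveI : IsNoetherian Aᵐᵒᵖ A := isNoetherian_of_tower K inferInstance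
  haveI : IsArtinian Aᵐᵒᵖ A := isArtinian_of_tower K inferInstance
  haveI : IsArtinianRing A := isArtinian_of_tower K inferInstance
  obtain ⟨e, he, hP, hQ⟩ := compl_idem D.compl
  obtain ⟨E, S, hES⟩ := idem_family e he
  have hS : ∀ i, i ∈ S ↔ ∃ x ∈ Γ, ∃ X : IndecModA Aᵐᵒᵖ, ARVertex.mk X = x ∧
      ∃ m : X.1.M, act m (E.e i) ≠ 0 := by
    intro i
    rw [top_iff hbasic E S e hES D.P hP i, comp_factor (E.prim i),
      D.top_factors _ (simp_simple (E.prim i))]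
    simp only [comp_factor (E.prim i)]
  have hconv := convex_rtg hbasic E S hΓ hS
  refine ⟨e, ⟨E, S, ?_, hES⟩, trace_equiv e he D.Q hQ (corner_vanish hbasic E S hconv e hES)⟩
  intro n c hc h0 hn k hk
  have hc' : ∀ k < n, Relation.ReflTransGen (QAarrow A E) (c k) (c (k + 1)) :=
    fun k hk => Relation.ReflTransGen.single (hc k hk)
  exact hconv (c 0) (c n) (c k) h0 hn (fun_rtg hc' _ _ (Nat.zero_le k) hk) (fun_rtg hc' _ _ hk le_rfl)
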